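/- Let n ≥ 1, α > 0 and 1 < q ≤ 1 + α/n. Suppose the coefficients a_{ij} satisfy condition (8) with this α and some c > 0. Let u be an entire weak solution of u_t ≥ Lu + |u|^{q−1}u in S and let v be an entire weak solution of v_t ≤ Lv + |v|^{q−1}v in S such that u ≥ v everywhere in S. Then u = v in S. -/

import Mathlib

open MeasureTheory Real

noncomputable section

/-- Euclidean space ℝⁿ. -/
abbrev Xn (n : ℕ) : Type := EuclideanSpace ℝ (Fin n)

/-- Points of the half-space `S = (0,∞) × ℝⁿ`. -/
abbrev Pt (n : ℕ) : Type := ℝ × Xn n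

/-- The half-space `S = (0,∞) × ℝⁿ`. -/
def halfSpace (n : ℕ) : Set (Pt n) := {p | 0 < p.1}

/-- Partial derivative in the time variable. -/
noncomputable def pdT {n : ℕ} (w : Pt n → ℝ) (p : Pt n) : ℝ :=
  fderiv ℝ w p (1, 0)

/-- Partial derivative in the space variable `x_j`. -/
noncomputable def pdX {n : ℕ} (w : Pt n → ℝ) (j : Fin n) (p : Pt n) : ℝ :=
  fderiv ℝ w p (0, EuclideanSpace.single j 1)

/-- The odd power function `x ↦ |x|^{q-1} x`. -/
noncomputable def oddPow (q x : ℝ) : ℝ := |x| ^ (q - 1) * x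

/-- Condition (8): `𝒜(R) ≤ c R^{2-α}` for all `R > 1`, expressed as an a.e. bound
on the majorant `A` over the region `{(t,x) : t > 0, R/2 < |x| < R}`. -/
def Cond8 {n : ℕ} (A : Pt n → ℝ) (α c : ℝ) : Prop :=
  ∀ R : ℝ, 1 < R →
    ∀ᵐ p ∂(volume.restrict
        {p : Pt n | 0 < p.1 ∧ R / 2 < ‖p.2‖ ∧ ‖p.2‖ < R}),
      A p ≤ c * R ^ (2 - α)

/-- `u` is an entire weak solution of `u_t ≥ Lu + |u|^{q−1}u` in `S`. -/
def WeakSuperSol {n : ℕ} (a : Fin n → Fin n → Pt n → ℝ) (q : ℝ)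
    (u : Pt n → ℝ) : Prop :=
  ∀ φ : Pt n → ℝ, ContDiff ℝ (⊤ : ℕ∞) φ → HasCompactSupport φ →
    tsupport φ ⊆ halfSpace n → (∀ p, 0 ≤ φ p) →
    0 ≤ ∫ p in halfSpace n,
        (pdT u p * φ p + ∑ i, ∑ j, a i j p * pdX φ i p * pdX u j p
          - oddPow q (u p) * φ p)

/-- `v` is an entire weak solution of `v_t ≤ Lv + |v|^{q−1}v` in `S`. -/
def WeakSubSol {n : ℕ} (a : Fin n → Fin n → Pt n → ℝ) (q : ℝ)
    (v : Pt n → ℝ) : Prop :=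
  ∀ φ : Pt n → ℝ, ContDiff ℝ (⊤ : ℕ∞) φ → HasCompactSupport φ →
    tsupport φ ⊆ halfSpace n → (∀ p, 0 ≤ φ p) →
    ∫ p in halfSpace n,
        (pdT v p * φ p + ∑ i, ∑ j, a i j p * pdX φ i p * pdX v j p
          - oddPow q (v p) * φ p) ≤ 0


/-!
Since `2 * ((x - y) / 2) ^ q ≤ |x| ^ (q - 1) * x - |y| ^ (q - 1) * y` for `y ≤ x`, half the
difference `w = (u - v) / 2` is a nonnegative weak solution of `w_t ≥ Lw + w ^ q`, so it suffices to
show that such a `w` vanishes. By mollification `w` may be tested against `C¹` functions. Let `ψ` be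
a cut-off on the parabolic scale `t ∼ R ^ α`, `|x| ∼ R`, so that condition (8) bounds both `-ψ_t`
and `∑ a_{ij} ∂_i ψ ∂_j ψ` by a multiple of `R ^ (-α)`. Testing with `(w + ε) ^ (-ν) * ψ ^ m` bounds
the weighted energy of `w`; testing with `ψ ^ m` then bounds `∫ w ^ q ψ ^ m` by that energy and by
integrals over the region `E` where `ψ` varies. In the critical case `α = n (q - 1)`, to which
condition (8) reduces the others, all powers of `R` cancel and, for every `σ > 0`,
`∫ w ^ q ψ ^ m ≤ C (σ + I ^ θ₁ + I ^ θ₂ / σ)`, where `I` is a multiple of `∫_E w ^ q ψ ^ m` and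
`θ₁, θ₂ < 1`. With `σ = 1` this makes `w ^ q` integrable; then `I → 0` as `R → ∞`, and letting
`σ → 0` gives `∫ w ^ q = 0`.
-/

/-! ### Real powers -/

lemma exists_rpow_mul_le_mul_add {θ κ : ℝ} (hθ0 : 0 ≤ θ) (hθ1 : θ < 1) (hκ : 0 < κ) :
    ∃ M : ℝ, 0 ≤ M ∧ ∀ x b : ℝ, 0 ≤ x → 0 ≤ b →
      x ^ θ * b ≤ κ * x + M * b ^ (1 / (1 - θ)) := by
  have hθ' : 0 < 1 - θ := sub_pos.2 hθ1
  refine ⟨(κ ^ (-θ)) ^ (1 / (1 - θ)), by positivity, fun x b hx hb => ?_⟩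
  have hcancel : (κ * x) ^ θ * (κ ^ (-θ) * b) = x ^ θ * b := by
    rw [mul_rpow hκ.le hx, rpow_neg hκ.le]
    field_simp
  calc x ^ θ * b
      = (κ * x) ^ θ * ((κ ^ (-θ) * b) ^ (1 / (1 - θ))) ^ (1 - θ) := by
        rw [← rpow_mul (by positivity), one_div_mul_cancel hθ'.ne', rpow_one, hcancel]
    _ ≤ θ * (κ * x) + (1 - θ) * (κ ^ (-θ) * b) ^ (1 / (1 - θ)) :=
        geom_mean_le_arith_mean2_weighted hθ0 hθ'.le (by positivity) (by positivity)
          (by ring)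
    _ ≤ κ * x + (κ ^ (-θ) * b) ^ (1 / (1 - θ)) :=
        add_le_add (mul_le_of_le_one_left (by positivity) hθ1.le)
          (mul_le_of_le_one_left (by positivity) (by linarith))
    _ = κ * x + (κ ^ (-θ)) ^ (1 / (1 - θ)) * b ^ (1 / (1 - θ)) := by
        rw [mul_rpow (by positivity) hb]

lemma exists_rpow_mul_rpow_mul_le_mul_add {θ κ : ℝ} (hθ0 : 0 ≤ θ) (hθ1 : θ < 1) (hκ : 0 < κ) :
    ∃ M : ℝ, 0 ≤ M ∧ ∀ x y b : ℝ, 0 ≤ x → 0 ≤ y → 0 ≤ b →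
      x ^ θ * y ^ (1 - θ) * b ≤ κ * x + M * (y * b ^ (1 / (1 - θ))) := by
  obtain ⟨M, hM0, hM⟩ := exists_rpow_mul_le_mul_add hθ0 hθ1 hκ
  refine ⟨M, hM0, fun x y b hx hy hb => ?_⟩
  have h := hM x (y ^ (1 - θ) * b) hx (by positivity)
  rwa [mul_rpow (by positivity) hb, ← rpow_mul hy, mul_one_div_cancel (sub_pos.2 hθ1).ne',
    rpow_one, ← mul_assoc] at h

lemma exists_forall_le_of_le_add_rpow {a b c C : ℝ} (ha0 : 0 ≤ a) (ha1 : a < 1) (hb0 : 0 ≤ b)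
    (hb1 : b < 1) (hc : 0 < c) (hC : 0 ≤ C) :
    ∃ B : ℝ, ∀ x : ℝ, 0 ≤ x → x ≤ C * (1 + (c * x) ^ a + (c * x) ^ b) → x ≤ B := by
  have hκ : 0 < 1 / (4 * c * (C + 1)) := by positivity
  obtain ⟨M, -, hM⟩ := exists_rpow_mul_le_mul_add ha0 ha1 hκ
  obtain ⟨M', -, hM'⟩ := exists_rpow_mul_le_mul_add hb0 hb1 hκ
  refine ⟨2 * (C * (1 + M + M')), fun x hx h => ?_⟩
  have h1 := hM (c * x) 1 (by positivity) zero_le_one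
  have h2 := hM' (c * x) 1 (by positivity) zero_le_one
  rw [one_rpow, mul_one, mul_one] at h1 h2
  have habsorb : C * (1 / (4 * c * (C + 1)) * (c * x)) ≤ x / 4 :=
    calc C * (1 / (4 * c * (C + 1)) * (c * x)) = C / (C + 1) * (x / 4) := by field_simp
      _ ≤ x / 4 :=
        mul_le_of_le_one_left (by positivity) ((div_le_one (by positivity)).2 (by linarith))
  have hx_le : x ≤ C * (1 + (M + M')) + 2 * (C * (1 / (4 * c * (C + 1)) * (c * x))) :=
    h.trans (by nlinarith)
  linarith

lemma add_rpow_le_two_rpow_mul {q x y : ℝ} (hq : 1 ≤ q) (hx : 0 ≤ x) (hy : 0 ≤ y) :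
    (x + y) ^ q ≤ 2 ^ (q - 1) * (x ^ q + y ^ q) := by
  exact_mod_cast NNReal.rpow_add_le_mul_rpow_add_rpow ⟨x, hx⟩ ⟨y, hy⟩ hq

lemma oddPow_of_nonneg {q x : ℝ} (hq : q ≠ 0) (hx : 0 ≤ x) : oddPow q x = x ^ q := by
  rcases hx.eq_or_lt with rfl | hx'
  · simp [oddPow, zero_rpow hq]
  · rw [oddPow, abs_of_nonneg hx, ← rpow_add_one hx'.ne', sub_add_cancel]

lemma oddPow_neg (q x : ℝ) : oddPow q (-x) = -oddPow q x := by
  simp [oddPow]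

lemma continuous_oddPow {q : ℝ} (hq : 1 ≤ q) : Continuous (oddPow q) :=
  (continuous_abs.rpow_const fun _ => Or.inr (sub_nonneg.2 hq)).mul continuous_id

lemma two_mul_half_sub_rpow_le_oddPow_sub {q x y : ℝ} (hq : 1 ≤ q) (h : y ≤ x) :
    2 * ((x - y) / 2) ^ q ≤ oddPow q x - oddPow q y := by
  have hq0 : q ≠ 0 := by positivity
  have oddPow_of_nonpos {z : ℝ} (hz : z ≤ 0) : oddPow q z = -(-z) ^ q := by
    rw [← oddPow_of_nonneg hq0 (neg_nonneg.2 hz), oddPow_neg, neg_neg]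
  have two_mul_half (z : ℝ) (hz : 0 ≤ z) : 2 * (z / 2) ^ q = 2 ^ (1 - q) * z ^ q := by
    rw [div_rpow hz zero_le_two, rpow_sub two_pos, rpow_one]
    ring
  have two_mul_half_le (z : ℝ) (hz : 0 ≤ z) : 2 * (z / 2) ^ q ≤ z ^ q := by
    rw [two_mul_half z hz]
    exact mul_le_of_le_one_left (by positivity)
      (rpow_le_one_of_one_le_of_nonpos one_le_two (by linarith))
  rcases le_total 0 y with hy | hy
  · rw [oddPow_of_nonneg hq0 (hy.trans h), oddPow_of_nonneg hq0 hy]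
    have := add_rpow_le_rpow_add (sub_nonneg.2 h) hy hq
    rw [sub_add_cancel] at this
    linarith [two_mul_half_le _ (sub_nonneg.2 h)]
  rcases le_total 0 x with hx | hx
  · rw [oddPow_of_nonneg hq0 hx, oddPow_of_nonpos hy, two_mul_half _ (sub_nonneg.2 h),
      sub_neg_eq_add, sub_eq_add_neg x y]
    calc (2 : ℝ) ^ (1 - q) * (x + -y) ^ q
        ≤ 2 ^ (1 - q) * (2 ^ (q - 1) * (x ^ q + (-y) ^ q)) := by
          gcongr
          exact add_rpow_le_two_rpow_mul hq hx (neg_nonneg.2 hy)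
      _ = x ^ q + (-y) ^ q := by
          rw [← mul_assoc, ← rpow_add two_pos, sub_add_sub_cancel', sub_self,
            rpow_zero, one_mul]
  · rw [oddPow_of_nonpos hx, oddPow_of_nonpos hy]
    have := add_rpow_le_rpow_add (sub_nonneg.2 h) (neg_nonneg.2 hx) hq
    rw [show x - y + -x = -y by ring] at this
    linarith [two_mul_half_le _ (sub_nonneg.2 h)]

/-! ### Jensen's inequality for powers -/

section Jensen

variable {X : Type*} [MeasurableSpace X] {μ : Measure X} {A : Set X} {f : X → ℝ} {θ : ℝ}

lemma integrableOn_rpow_of_le_one (hA : μ A ≠ ⊤) (hθ0 : 0 ≤ θ) (hθ1 : θ ≤ 1)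
    (hf0 : 0 ≤ᵐ[μ.restrict A] f) (hf : IntegrableOn f A μ) :
    IntegrableOn (fun x => f x ^ θ) A μ := by
  refine ((integrableOn_const hA (C := (1 : ℝ))).add hf).mono'
    (hf.aemeasurable.pow_const θ).aestronglyMeasurable (hf0.mono fun x hx => ?_)
  have hx : 0 ≤ f x := hx
  rw [norm_of_nonneg (rpow_nonneg hx θ), Pi.add_apply]
  rcases le_total (f x) 1 with h | h
  · exact (rpow_le_one hx h hθ0).trans (le_add_of_nonneg_right hx)
  · exact (rpow_le_self_of_one_le h hθ1).trans (le_add_of_nonneg_left zero_le_one)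

lemma setIntegral_rpow_le {V : ℝ} (hV : 0 ≤ V) (hA : μ A ≤ ENNReal.ofReal V) (hθ0 : 0 ≤ θ)
    (hθ1 : θ ≤ 1) (hf0 : 0 ≤ᵐ[μ.restrict A] f) (hf : IntegrableOn f A μ) :
    ∫ x in A, f x ^ θ ∂μ ≤ (∫ x in A, f x ∂μ) ^ θ * V ^ (1 - θ) := by
  have hI : 0 ≤ ∫ x in A, f x ∂μ := integral_nonneg_of_ae hf0
  have hA_top : μ A ≠ ⊤ := (hA.trans_lt ENNReal.ofReal_lt_top).ne
  rcases eq_or_ne (μ A) 0 with hA0 | hA0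
  · rw [Measure.restrict_eq_zero.2 hA0, integral_zero_measure, integral_zero_measure]
    positivity
  have hM : 0 < μ.real A := ENNReal.toReal_pos hA0 hA_top
  have jensen := (concaveOn_rpow hθ0 hθ1).le_map_set_average
    (continuous_rpow_const hθ0).continuousOn isClosed_Ici hA0 hA_top hf0 hf
    (integrableOn_rpow_of_le_one hA_top hθ0 hθ1 hf0 hf)
  rw [setAverage_eq, setAverage_eq, smul_eq_mul, smul_eq_mul, inv_mul_le_iff₀ hM] at jensen
  calc ∫ x in A, f x ^ θ ∂μ
      ≤ μ.real A * ((μ.real A)⁻¹ * ∫ x in A, f x ∂μ) ^ θ := jensen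
    _ = (∫ x in A, f x ∂μ) ^ θ * μ.real A ^ (1 - θ) := by
        rw [mul_rpow (by positivity) hI, inv_rpow hM.le, rpow_sub hM,
          rpow_one]
        ring
    _ ≤ (∫ x in A, f x ∂μ) ^ θ * V ^ (1 - θ) := by
        have : 0 ≤ 1 - θ := sub_nonneg.2 hθ1
        gcongr
        exact ENNReal.toReal_le_of_le_ofReal hV hA

lemma integral_rpow_mul_pow_le {h ψ : X → ℝ} {V k s : ℝ} {m m' : ℕ} (hV : 0 ≤ V)
    (hψV : μ ψ.support ≤ ENNReal.ofReal V) (hψ0 : ∀ x, 0 ≤ ψ x) (hψ1 : ∀ x, ψ x ≤ 1)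
    (hh : 0 ≤ᵐ[μ] h) (hint : Integrable (fun x => h x ^ s * ψ x ^ m') μ) (hk : 0 ≤ k)
    (hs : 0 < s) (hks : k ≤ s) (hm : m ≠ 0) (hm' : m' * k ≤ m * s) :
    ∫ x, h x ^ k * ψ x ^ m ∂μ
      ≤ (∫ x, h x ^ s * ψ x ^ m' ∂μ) ^ (k / s) * V ^ (1 - k / s) := by
  have hθ0 : 0 ≤ k / s := by positivity
  have hθ1 : k / s ≤ 1 := (div_le_one hs).2 hks
  have hf0 : 0 ≤ᵐ[μ] fun x => h x ^ s * ψ x ^ m' := hh.mono fun x hx =>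
    mul_nonneg (rpow_nonneg hx s) (pow_nonneg (hψ0 x) m')
  have hpointwise (x : X) (hx : 0 ≤ h x) :
      h x ^ k * ψ x ^ m ≤ (h x ^ s * ψ x ^ m') ^ (k / s) := by
    rcases (hψ0 x).eq_or_lt with hψx | hψx
    · rw [← hψx, zero_pow hm, mul_zero]
      positivity
    rw [mul_rpow (by positivity) (by positivity), ← rpow_mul hx,
      mul_div_cancel₀ _ hs.ne', ← rpow_natCast_mul hψx.le, ← rpow_natCast]
    gcongr ?_ * ?_
    refine rpow_le_rpow_of_exponent_ge hψx (hψ1 x) ?_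
    rwa [← mul_div_assoc, div_le_iff₀ hs]
  have hψ_top : μ ψ.support ≠ ⊤ := (hψV.trans_lt ENNReal.ofReal_lt_top).ne
  calc ∫ x, h x ^ k * ψ x ^ m ∂μ
      = ∫ x in ψ.support, h x ^ k * ψ x ^ m ∂μ :=
        (setIntegral_eq_integral_of_forall_compl_eq_zero fun x hx => by
          rw [Function.notMem_support.1 hx, zero_pow hm, mul_zero]).symm
    _ ≤ ∫ x in ψ.support, (h x ^ s * ψ x ^ m') ^ (k / s) ∂μ := by
        refine integral_mono_of_nonneg (ae_restrict_of_ae (hh.mono fun x hx =>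
            mul_nonneg (rpow_nonneg hx k) (pow_nonneg (hψ0 x) m)))
          (integrableOn_rpow_of_le_one hψ_top hθ0 hθ1 (ae_restrict_of_ae hf0) hint.integrableOn)
          (ae_restrict_of_ae (hh.mono hpointwise))
    _ ≤ (∫ x in ψ.support, h x ^ s * ψ x ^ m' ∂μ) ^ (k / s) * V ^ (1 - k / s) :=
        setIntegral_rpow_le hV hψV hθ0 hθ1 (ae_restrict_of_ae hf0) hint.integrableOn
    _ ≤ (∫ x, h x ^ s * ψ x ^ m' ∂μ) ^ (k / s) * V ^ (1 - k / s) := by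
        gcongr
        · exact integral_nonneg_of_ae (ae_restrict_of_ae hf0)
        · exact Measure.restrict_le_self

end Jensen

/-! ### Test functions -/

section TestFunction

open Filter Topology
open scoped ContDiff Convolution

variable {E : Type*} [NormedAddCommGroup E] [NormedSpace ℝ E] {k : WithTop ℕ∞} {Ω : Set E}
  {φ : E → ℝ}

/-- A nonnegative `C^k` function with compact support contained in `Ω`. -/
structure IsTestFunction (k : WithTop ℕ∞) (Ω : Set E) (φ : E → ℝ) : Prop where
  contDiff : ContDiff ℝ k φ
  hasCompactSupport : HasCompactSupport φ
  tsupport_subset : tsupport φ ⊆ Ω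
  nonneg : ∀ x, 0 ≤ φ x

lemma IsTestFunction.mono {Ω' : Set E} (hφ : IsTestFunction k Ω φ) (h : Ω ⊆ Ω') :
    IsTestFunction k Ω' φ :=
  ⟨hφ.contDiff, hφ.hasCompactSupport, hφ.tsupport_subset.trans h, hφ.nonneg⟩

lemma contDiff_mul_of_tsupport_subset {f : E → ℝ} (hΩ : IsOpen Ω) (hf : ContDiffOn ℝ k f Ω)
    (hφ : ContDiff ℝ k φ) (hφΩ : tsupport φ ⊆ Ω) : ContDiff ℝ k fun x => f x * φ x := by
  rw [contDiff_iff_contDiffAt]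
  intro x
  by_cases hx : x ∈ tsupport φ
  · exact (hf.contDiffAt (hΩ.mem_nhds (hφΩ hx))).mul hφ.contDiffAt
  · refine contDiffAt_const (c := (0 : ℝ)) |>.congr_of_eventuallyEq ?_
    filter_upwards [notMem_tsupport_iff_eventuallyEq.1 hx] with y hy
    rw [hy, Pi.zero_apply, mul_zero]

lemma IsTestFunction.mul_of_nonneg {f : E → ℝ} (hΩ : IsOpen Ω) (hφ : IsTestFunction k Ω φ)
    (hf : ContDiffOn ℝ k f Ω) (hf0 : ∀ x ∈ Ω, 0 ≤ f x) :
    IsTestFunction k Ω fun x => f x * φ x where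
  contDiff := contDiff_mul_of_tsupport_subset hΩ hf hφ.contDiff hφ.tsupport_subset
  hasCompactSupport := hφ.hasCompactSupport.mul_left
  tsupport_subset := (tsupport_mul_subset_right (f := f)).trans hφ.tsupport_subset
  nonneg x := by
    by_cases hx : x ∈ tsupport φ
    · exact mul_nonneg (hf0 x (hφ.tsupport_subset hx)) (hφ.nonneg x)
    · rw [image_eq_zero_of_notMem_tsupport hx, mul_zero]

lemma IsTestFunction.pow (hφ : IsTestFunction k Ω φ) {m : ℕ} (hm : m ≠ 0) :
    IsTestFunction k Ω fun x => φ x ^ m := by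
  have hsupp : tsupport (fun x => φ x ^ m) ⊆ tsupport φ :=
    closure_mono fun x hx hx0 => hx (by simp only [hx0, zero_pow hm])
  exact ⟨hφ.contDiff.pow m, hφ.hasCompactSupport.of_isClosed_subset (isClosed_tsupport _) hsupp,
    hsupp.trans hφ.tsupport_subset, fun x => pow_nonneg (hφ.nonneg x) m⟩

lemma norm_normed_convolution_le [FiniteDimensional ℝ E] [MeasurableSpace E] [BorelSpace E]
    {μ : Measure E} [μ.IsAddHaarMeasure] {F : Type*} [NormedAddCommGroup F] [NormedSpace ℝ F]
    (b : ContDiffBump (0 : E)) {g : E → F} {M : ℝ} (hg : ∀ x, ‖g x‖ ≤ M) (x : E) :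
    ‖(b.normed μ ⋆[ContinuousLinearMap.lsmul ℝ ℝ, μ] g) x‖ ≤ M := by
  calc ‖(b.normed μ ⋆[ContinuousLinearMap.lsmul ℝ ℝ, μ] g) x‖
      ≤ ∫ y, b.normed μ y * M ∂μ := by
        refine norm_integral_le_of_norm_le (b.integrable_normed.mul_const M)
          (.of_forall fun y => ?_)
        rw [ContinuousLinearMap.lsmul_apply, norm_smul,
          Real.norm_of_nonneg (b.nonneg_normed y)]
        exact mul_le_mul_of_nonneg_left (hg _) (b.nonneg_normed y)
    _ = M := by rw [integral_mul_const, b.integral_normed, one_mul]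

lemma tsupport_normed_convolution_subset [FiniteDimensional ℝ E] [MeasurableSpace E] [BorelSpace E]
    {μ : Measure E} [μ.IsAddHaarMeasure] (b : ContDiffBump (0 : E)) {δ : ℝ} (hδ : b.rOut ≤ δ)
    (φ : E → ℝ) :
    tsupport (b.normed μ ⋆[ContinuousLinearMap.lsmul ℝ ℝ, μ] φ)
      ⊆ Metric.cthickening δ (tsupport φ) := by
  refine closure_minimal (fun x hx => ?_) Metric.isClosed_cthickening
  by_contra hxδ
  have hzero (y : E) (hy : y ∈ Metric.ball x b.rOut) : φ y = 0 :=
    image_eq_zero_of_notMem_tsupport fun hy' => hxδ <|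
      Metric.mem_cthickening_of_dist_le x y δ _ hy' ((dist_comm x y).trans_le
        ((Metric.mem_ball.1 hy).le.trans hδ))
  have hx0 := hzero x (Metric.mem_ball_self b.rOut_pos)
  refine hx ((b.normed_convolution_eq_right (μ := μ) (g := φ) fun y hy => ?_).trans hx0)
  rw [hzero y hy, hx0]

omit [NormedSpace ℝ E] in
lemma exists_contDiffBump_seq {δ : ℝ} (hδ : 0 < δ) :
    ∃ b : ℕ → ContDiffBump (0 : E), (∀ j, (b j).rOut ≤ δ) ∧
      Tendsto (fun j => (b j).rOut) atTop (𝓝 0) := by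
  refine ⟨fun j => ⟨δ / (j + 1) / 2, δ / (j + 1), by positivity, half_lt_self (by positivity)⟩,
    fun j => div_le_self hδ.le (by simp), ?_⟩
  exact tendsto_const_nhds.div_atTop (tendsto_natCast_atTop_atTop.atTop_add tendsto_const_nhds)

lemma IsTestFunction.exists_seq_tendsto [FiniteDimensional ℝ E] (hΩ : IsOpen Ω)
    (hφ : IsTestFunction 1 Ω φ) :
    ∃ (K : Set E) (M : ℝ) (φs : ℕ → E → ℝ), IsCompact K ∧ K ⊆ Ω ∧
      (∀ j, IsTestFunction ∞ K (φs j)) ∧ (∀ j x, ‖φs j x‖ ≤ M) ∧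
      (∀ j x, ‖fderiv ℝ (φs j) x‖ ≤ M) ∧ (∀ x, Tendsto (φs · x) atTop (𝓝 (φ x))) ∧
      ∀ x, Tendsto (fun j => fderiv ℝ (φs j) x) atTop (𝓝 (fderiv ℝ φ x)) := by
  let _ : MeasurableSpace E := borel E
  have _ : BorelSpace E := ⟨rfl⟩
  let μ : Measure E := Measure.addHaar
  obtain ⟨hφ1, hφc, hφΩ, hφ0⟩ := hφ
  obtain ⟨δ, hδ, hδΩ⟩ := hφc.isCompact.exists_cthickening_subset_open hΩ hφΩ
  obtain ⟨b, hbδ, hb0⟩ := exists_contDiffBump_seq (E := E) hδ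
  have hDφ : Continuous (fderiv ℝ φ) := hφ1.continuous_fderiv one_ne_zero
  obtain ⟨M₁, hM₁⟩ := hφ1.continuous.bounded_above_of_compact_support hφc
  obtain ⟨M₂, hM₂⟩ := hDφ.bounded_above_of_compact_support (hφc.fderiv ℝ)
  have hK : IsCompact (Metric.cthickening δ (tsupport φ)) := hφc.isCompact.cthickening
  let φs (j : ℕ) : E → ℝ := (b j).normed μ ⋆[ContinuousLinearMap.lsmul ℝ ℝ, μ] φ
  have hfderiv (j : ℕ) (x : E) : fderiv ℝ (φs j) x =
      ((b j).normed μ ⋆[ContinuousLinearMap.lsmul ℝ ℝ, μ] fderiv ℝ φ) x :=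
    (hφc.hasFDerivAt_convolution_right (ContinuousLinearMap.lsmul ℝ ℝ)
      ((b j).contDiff_normed (n := 0)).continuous.locallyIntegrable hφ1 x).fderiv
  have hsupp (j : ℕ) := tsupport_normed_convolution_subset (μ := μ) (b j) (hbδ j) φ
  refine ⟨_, max M₁ M₂, φs, hK, hδΩ, fun j => ⟨?_, hK.of_isClosed_subset (isClosed_tsupport _)
    (hsupp j), hsupp j, fun x => ?_⟩, fun j x => ?_, fun j x => ?_, fun x => ?_, fun x => ?_⟩
  · exact (b j).hasCompactSupport_normed.contDiff_convolution_left _ (b j).contDiff_normed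
      hφ1.continuous.locallyIntegrable
  · exact integral_nonneg fun y => mul_nonneg ((b j).nonneg_normed y) (hφ0 _)
  · exact norm_normed_convolution_le (b j) (fun x => (hM₁ x).trans (le_max_left _ _)) x
  · rw [hfderiv]
    exact norm_normed_convolution_le (b j) (fun x => (hM₂ x).trans (le_max_right _ _)) x
  · exact ContDiffBump.convolution_tendsto_right_of_continuous hb0 hφ1.continuous x
  · simp only [hfderiv]
    exact ContDiffBump.convolution_tendsto_right_of_continuous hb0 hDφ x

lemma setIntegral_nonneg_of_forall_smooth [FiniteDimensional ℝ E] [MeasurableSpace E]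
    [BorelSpace E] {μ : Measure E} (hΩ : IsOpen Ω) {P : E → ℝ} {H : E → E}
    (hP : LocallyIntegrableOn P Ω μ) (hH : LocallyIntegrableOn H Ω μ)
    (h : ∀ φ, IsTestFunction ∞ Ω φ → 0 ≤ ∫ x in Ω, (P x * φ x + fderiv ℝ φ x (H x)) ∂μ)
    (hφ : IsTestFunction 1 Ω φ) : 0 ≤ ∫ x in Ω, (P x * φ x + fderiv ℝ φ x (H x)) ∂μ := by
  obtain ⟨K, M, φs, hK, hKΩ, hφs, hM, hDM, hlim, hDlim⟩ := hφ.exists_seq_tendsto hΩ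
  have hmeas (j : ℕ) :
      AEStronglyMeasurable (fun x => P x * φs j x + fderiv ℝ (φs j) x (H x)) (μ.restrict Ω) :=
    (hP.aestronglyMeasurable.mul (hφs j).contDiff.continuous.aestronglyMeasurable).add
      (isBoundedBilinearMap_apply.continuous.comp_aestronglyMeasurable
        (((hφs j).contDiff.continuous_fderiv (by simp)).aestronglyMeasurable.prodMk
          hH.aestronglyMeasurable))
  have hbound (j : ℕ) (x : E) : ‖P x * φs j x + fderiv ℝ (φs j) x (H x)‖
      ≤ K.indicator (fun x => ‖P x‖ * M + M * ‖H x‖) x := by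
    by_cases hx : x ∈ K
    · rw [Set.indicator_of_mem hx]
      exact norm_add_le_of_le ((norm_mul_le _ _).trans (by gcongr; exact hM j x))
        ((ContinuousLinearMap.le_opNorm _ _).trans (by gcongr; exact hDM j x))
    · have hx' : x ∉ tsupport (φs j) := fun h => hx ((hφs j).tsupport_subset h)
      rw [Set.indicator_of_notMem hx, image_eq_zero_of_notMem_tsupport hx',
        fderiv_of_notMem_tsupport ℝ hx']
      simp
  have hbound_int : Integrable (K.indicator fun x => ‖P x‖ * M + M * ‖H x‖) (μ.restrict Ω) :=
    ((integrable_indicator_iff hK.measurableSet).2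
      (((hP.integrableOn_compact_subset hKΩ hK).norm.mul_const M).add
        ((hH.integrableOn_compact_subset hKΩ hK).norm.const_mul M))).restrict
  refine ge_of_tendsto' (tendsto_integral_of_dominated_convergence _ hmeas hbound_int
    (fun j => .of_forall (hbound j)) (.of_forall fun x => ?_))
    fun j => h (φs j) ((hφs j).mono hKΩ)
  exact ((hlim x).const_mul (P x)).add
    (((ContinuousLinearMap.apply ℝ ℝ (H x)).continuous.tendsto _).comp (hDlim x))

end TestFunction

section LocallyIntegrable

variable {X : Type*} [TopologicalSpace X] [T2Space X] [MeasurableSpace X] [OpensMeasurableSpace X]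
  {μ : Measure X} {Ω K : Set X} {f g : X → ℝ}

lemma integrable_mul_of_support_subset [SecondCountableTopologyEither X ℝ]
    (hf : LocallyIntegrableOn f Ω μ)
    (hg : ContinuousOn g Ω) (hK : IsCompact K) (hKΩ : K ⊆ Ω) (hgK : g.support ⊆ K) :
    Integrable (fun x => f x * g x) μ := by
  refine (integrableOn_iff_integrable_of_support_subset ?_).1
    ((hf.integrableOn_compact_subset hKΩ hK).mul_continuousOn (hg.mono hKΩ) hK)
  exact (Function.support_mul_subset_right f g).trans hgK

lemma locallyIntegrableOn_of_bounded_on_compacts [LocallyCompactSpace X]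
    [IsFiniteMeasureOnCompacts μ]
    (hΩ : IsOpen Ω) (hf : Measurable f)
    (hbdd : ∀ K : Set X, IsCompact K → K ⊆ Ω → ∃ M, ∀ x ∈ K, |f x| ≤ M) :
    LocallyIntegrableOn f Ω μ := by
  rw [locallyIntegrableOn_iff hΩ.isLocallyClosed]
  intro K hKΩ hK
  obtain ⟨M, hM⟩ := hbdd K hK hKΩ
  exact Measure.integrableOn_of_bounded (M := M) hK.measure_lt_top.ne hf.aestronglyMeasurable
    (ae_restrict_of_forall_mem hK.measurableSet hM)

end LocallyIntegrable

/-! ### Weak parabolic inequalities -/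

section Parabolic

open scoped ContDiff

variable {n : ℕ} {k : WithTop ℕ∞} {a : Fin n → Fin n → Pt n → ℝ} {w g g' h φ ψ : Pt n → ℝ}
  {p : Pt n}

lemma isOpen_halfSpace (n : ℕ) : IsOpen (halfSpace n) :=
  isOpen_lt continuous_const continuous_fst

instance isAddHaarMeasure_volume_pt (n : ℕ) : (volume : Measure (Pt n)).IsAddHaarMeasure :=
  inferInstanceAs ((volume : Measure ℝ).prod (volume : Measure (Xn n))).IsAddHaarMeasure

/-- The spatial gradient `∇w`. -/
def spaceGrad (w : Pt n → ℝ) (p : Pt n) : Xn n :=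
  WithLp.toLp 2 fun j => pdX w j p

/-- The bilinear form `(ξ, η) ↦ ∑ a_{ij}(p) ξ_i η_j` associated with the operator `L`. -/
def coeffForm (a : Fin n → Fin n → Pt n → ℝ) (p : Pt n) : LinearMap.BilinForm ℝ (Xn n) :=
  LinearMap.mk₂ ℝ (fun ξ η => ∑ i, ∑ j, a i j p * ξ i * η j)
    (fun ξ ξ' η => by
      simp only [PiLp.add_apply, mul_add, add_mul, Finset.sum_add_distrib])
    (fun r ξ η => by
      simp only [PiLp.smul_apply, smul_eq_mul, Finset.mul_sum]
      exact Finset.sum_congr rfl fun i _ => Finset.sum_congr rfl fun j _ => by ring)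
    (fun ξ η η' => by
      simp only [PiLp.add_apply, mul_add, Finset.sum_add_distrib])
    (fun r ξ η => by
      simp only [PiLp.smul_apply, smul_eq_mul, Finset.mul_sum]
      exact Finset.sum_congr rfl fun i _ => Finset.sum_congr rfl fun j _ => by ring)

lemma coeffForm_apply (a : Fin n → Fin n → Pt n → ℝ) (p : Pt n) (ξ η : Xn n) :
    coeffForm a p ξ η = ∑ i, ∑ j, a i j p * ξ i * η j :=
  rfl

/-- `w` satisfies `w_t ≥ Lw + g` in the half-space, in the weak sense and tested against
nonnegative `C^k` functions. -/
def WeakParabolicIneq (k : WithTop ℕ∞) (a : Fin n → Fin n → Pt n → ℝ) (w g : Pt n → ℝ) : Prop :=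
  ∀ φ, IsTestFunction k (halfSpace n) φ →
    0 ≤ ∫ p in halfSpace n,
      (pdT w p * φ p + coeffForm a p (spaceGrad φ p) (spaceGrad w p) - g p * φ p)

lemma isSymm_coeffForm (ha : ∀ i j, a i j p = a j i p) : (coeffForm a p).IsSymm := by
  refine ⟨fun ξ η => ?_⟩
  rw [coeffForm_apply, coeffForm_apply, Finset.sum_comm]
  refine Finset.sum_congr rfl fun i _ => Finset.sum_congr rfl fun j _ => ?_
  rw [ha j i]
  ring

lemma ae_isPosSemidef_coeffForm {μ : Measure (Pt n)} (hsymm : ∀ i j, ∀ᵐ p ∂μ, a i j p = a j i p)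
    (hnonneg : ∀ᵐ p ∂μ, ∀ ξ : Xn n, 0 ≤ ∑ i, ∑ j, a i j p * ξ i * ξ j) :
    ∀ᵐ p ∂μ, (coeffForm a p).IsPosSemidef := by
  filter_upwards [ae_all_iff.2 fun i => ae_all_iff.2 (hsymm i), hnonneg] with p hs h0
  exact LinearMap.BilinForm.isPosSemidef_def.2 ⟨isSymm_coeffForm hs, ⟨h0⟩⟩

lemma isPosSemidef_two_mul_apply_le {V : Type*} [AddCommGroup V] [Module ℝ V]
    {B : LinearMap.BilinForm ℝ V} (hB : B.IsPosSemidef) (x y : ℝ) (ξ η : V) :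
    2 * (x * y) * B ξ η ≤ x ^ 2 * B ξ ξ + y ^ 2 * B η η := by
  have h := hB.nonneg (x • ξ - y • η)
  simp only [map_sub, map_smul, LinearMap.sub_apply, LinearMap.smul_apply, smul_eq_mul] at h
  rw [hB.isSymm.eq η ξ] at h
  linarith

lemma pdT_eq_of_hasFDerivAt {b c : ℝ}
    (hφ : HasFDerivAt φ (b • fderiv ℝ h p + c • fderiv ℝ ψ p) p) :
    pdT φ p = b * pdT h p + c * pdT ψ p := by
  simp only [pdT, hφ.fderiv, add_apply, smul_apply, smul_eq_mul]

lemma spaceGrad_eq_of_hasFDerivAt {b c : ℝ}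
    (hφ : HasFDerivAt φ (b • fderiv ℝ h p + c • fderiv ℝ ψ p) p) :
    spaceGrad φ p = b • spaceGrad h p + c • spaceGrad ψ p := by
  ext j
  simp only [spaceGrad, pdX, hφ.fderiv, add_apply, smul_apply,
    PiLp.add_apply, PiLp.smul_apply, smul_eq_mul]

lemma continuousOn_fderiv_halfSpace (hw : ContDiffOn ℝ 1 w (halfSpace n)) :
    ContinuousOn (fderiv ℝ w) (halfSpace n) :=
  hw.continuousOn_fderiv_of_isOpen (isOpen_halfSpace n) le_rfl

lemma continuousOn_pdT (hw : ContDiffOn ℝ 1 w (halfSpace n)) :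
    ContinuousOn (pdT w) (halfSpace n) :=
  (continuousOn_fderiv_halfSpace hw).clm_apply continuousOn_const

lemma continuousOn_spaceGrad (hw : ContDiffOn ℝ 1 w (halfSpace n)) :
    ContinuousOn (spaceGrad w) (halfSpace n) :=
  (PiLp.continuous_toLp 2 _).comp_continuousOn <| continuousOn_pi.2 fun _ =>
    (continuousOn_fderiv_halfSpace hw).clm_apply continuousOn_const

lemma spaceGrad_eq_zero_of_notMem_tsupport (hp : p ∉ tsupport φ) : spaceGrad φ p = 0 := by
  ext j
  simp [spaceGrad, pdX, fderiv_of_notMem_tsupport ℝ hp]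

lemma integrable_mul_isTestFunction {f : Pt n → ℝ}
    (hf : LocallyIntegrableOn f (halfSpace n)) (hφ : IsTestFunction k (halfSpace n) φ) :
    Integrable fun p => f p * φ p :=
  integrable_mul_of_support_subset hf hφ.contDiff.continuous.continuousOn hφ.hasCompactSupport
    hφ.tsupport_subset (subset_tsupport φ)

lemma integrable_coeffForm (ha : ∀ i j, LocallyIntegrableOn (a i j) (halfSpace n))
    {ξ η : Pt n → Xn n} (hξ : ContinuousOn ξ (halfSpace n)) (hη : ContinuousOn η (halfSpace n))
    {K : Set (Pt n)} (hK : IsCompact K) (hKS : K ⊆ halfSpace n) (hξK : ξ.support ⊆ K) :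
    Integrable fun p => coeffForm a p (ξ p) (η p) := by
  have hcoord {ζ : Pt n → Xn n} (hζ : ContinuousOn ζ (halfSpace n)) (i : Fin n) :
      ContinuousOn (fun p => ζ p i) (halfSpace n) :=
    (PiLp.continuous_apply 2 _ i).comp_continuousOn hζ
  simp only [coeffForm_apply, mul_assoc]
  refine integrable_finsetSum _ fun i _ => integrable_finsetSum _ fun j _ =>
    integrable_mul_of_support_subset (ha i j) ((hcoord hξ i).mul (hcoord hη j)) hK hKS
      (Function.support_subset_iff'.2 fun p hp => ?_)
  rw [Function.notMem_support.1 fun h => hp (hξK h), PiLp.zero_apply, zero_mul]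

lemma integrable_weak_integrand (ha : ∀ i j, LocallyIntegrableOn (a i j) (halfSpace n))
    (hw : ContDiffOn ℝ 1 w (halfSpace n)) (hg : ContinuousOn g (halfSpace n)) (hk : 1 ≤ k)
    (hφ : IsTestFunction k (halfSpace n) φ) :
    Integrable fun p =>
      pdT w p * φ p + coeffForm a p (spaceGrad φ p) (spaceGrad w p) - g p * φ p := by
  have hloc {f : Pt n → ℝ} (hf : ContinuousOn f (halfSpace n)) :=
    integrable_mul_isTestFunction
      (hf.locallyIntegrableOn (isOpen_halfSpace n).measurableSet) hφ
  refine ((hloc (continuousOn_pdT hw)).add ?_).sub (hloc hg)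
  exact integrable_coeffForm ha (continuousOn_spaceGrad (hφ.contDiff.of_le hk).contDiffOn)
    (continuousOn_spaceGrad hw) hφ.hasCompactSupport hφ.tsupport_subset
    (Function.support_subset_iff'.2 fun p => spaceGrad_eq_zero_of_notMem_tsupport)

/-- The vector field `(0, a∇w)` on space-time, whose divergence is `Lw`. -/
def flux (a : Fin n → Fin n → Pt n → ℝ) (w : Pt n → ℝ) (p : Pt n) : Pt n :=
  ∑ i, ∑ j, (a i j p * pdX w j p) • ((0, EuclideanSpace.single i 1) : Pt n)

lemma fderiv_flux (a : Fin n → Fin n → Pt n → ℝ) (φ w : Pt n → ℝ) (p : Pt n) :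
    fderiv ℝ φ p (flux a w p) = coeffForm a p (spaceGrad φ p) (spaceGrad w p) := by
  simp only [flux, map_sum, map_smul, smul_eq_mul, coeffForm_apply, spaceGrad, pdX]
  exact Finset.sum_congr rfl fun i _ => Finset.sum_congr rfl fun j _ => by ring

lemma locallyIntegrableOn_flux (ha : ∀ i j, LocallyIntegrableOn (a i j) (halfSpace n))
    (hw : ContDiffOn ℝ 1 w (halfSpace n)) : LocallyIntegrableOn (flux a w) (halfSpace n) := by
  rw [locallyIntegrableOn_iff (isOpen_halfSpace n).isLocallyClosed]
  intro K hKS hK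
  refine integrable_finsetSum _ fun i _ => integrable_finsetSum _ fun j _ =>
    Integrable.smul_const (IntegrableOn.mul_continuousOn
      ((ha i j).integrableOn_compact_subset hKS hK) ?_ hK) _
  exact ((continuousOn_fderiv_halfSpace hw).mono hKS).clm_apply continuousOn_const

namespace WeakParabolicIneq

lemma of_smooth (ha : ∀ i j, LocallyIntegrableOn (a i j) (halfSpace n))
    (hw : ContDiffOn ℝ 1 w (halfSpace n)) (hg : ContinuousOn g (halfSpace n))
    (hwg : WeakParabolicIneq ∞ a w g) : WeakParabolicIneq 1 a w g := by
  have hrw (φ : Pt n → ℝ) (p : Pt n) :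
      pdT w p * φ p + coeffForm a p (spaceGrad φ p) (spaceGrad w p) - g p * φ p =
        (pdT w p - g p) * φ p + fderiv ℝ φ p (flux a w p) := by
    rw [fderiv_flux]
    ring
  simp only [WeakParabolicIneq, hrw] at hwg ⊢
  exact fun φ => setIntegral_nonneg_of_forall_smooth (isOpen_halfSpace n)
    (((continuousOn_pdT hw).sub hg).locallyIntegrableOn (isOpen_halfSpace n).measurableSet)
    (locallyIntegrableOn_flux ha hw) hwg

lemma mono_right (ha : ∀ i j, LocallyIntegrableOn (a i j) (halfSpace n))
    (hw : ContDiffOn ℝ 1 w (halfSpace n)) (hg : ContinuousOn g (halfSpace n))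
    (hg' : ContinuousOn g' (halfSpace n)) (hgg' : ∀ p ∈ halfSpace n, g p ≤ g' p) (hk : 1 ≤ k)
    (hwg' : WeakParabolicIneq k a w g') : WeakParabolicIneq k a w g := by
  refine fun φ hφ => (hwg' φ hφ).trans (setIntegral_mono_on
    (integrable_weak_integrand ha hw hg' hk hφ).integrableOn
    (integrable_weak_integrand ha hw hg hk hφ).integrableOn
    (isOpen_halfSpace n).measurableSet fun p hp => ?_)
  linarith [mul_le_mul_of_nonneg_right (hgg' p hp) (hφ.nonneg p)]

lemma setIntegral_mul_le {G : Pt n → ℝ} (ha : ∀ i j, LocallyIntegrableOn (a i j) (halfSpace n))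
    (hw : ContDiffOn ℝ 1 w (halfSpace n)) (hg : ContinuousOn g (halfSpace n)) (hk : 1 ≤ k)
    (hwg : WeakParabolicIneq k a w g) (hφ : IsTestFunction k (halfSpace n) φ)
    (hG : IntegrableOn G (halfSpace n))
    (hle : ∀ᵐ p ∂(volume.restrict (halfSpace n)),
      pdT w p * φ p + coeffForm a p (spaceGrad φ p) (spaceGrad w p) ≤ G p) :
    ∫ p in halfSpace n, g p * φ p ≤ ∫ p in halfSpace n, G p := by
  have hgφ : IntegrableOn (fun p => g p * φ p) (halfSpace n) :=
    (integrable_mul_isTestFunction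
      (hg.locallyIntegrableOn (isOpen_halfSpace n).measurableSet) hφ).integrableOn
  rw [← sub_nonneg, ← integral_sub hG hgφ]
  exact (hwg φ hφ).trans (integral_mono_ae (integrable_weak_integrand ha hw hg hk hφ).integrableOn
    (hG.sub hgφ) (hle.mono fun p hp => sub_le_sub_right hp _))

lemma add_const (hwg : WeakParabolicIneq k a w g) (ε : ℝ) :
    WeakParabolicIneq k a (fun p => w p + ε) g := by
  simpa only [WeakParabolicIneq, pdT, spaceGrad, pdX, fderiv_add_const] using hwg

end WeakParabolicIneq

lemma weakParabolicIneq_half_sub {q : ℝ} {u v : Pt n → ℝ} (hq : 1 ≤ q)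
    (ha : ∀ i j, LocallyIntegrableOn (a i j) (halfSpace n))
    (hu : ContDiffOn ℝ 1 u (halfSpace n)) (hv : ContDiffOn ℝ 1 v (halfSpace n))
    (hsup : WeakSuperSol a q u) (hsub : WeakSubSol a q v) :
    WeakParabolicIneq ∞ a (fun p => (u p - v p) / 2)
      fun p => (oddPow q (u p) - oddPow q (v p)) / 2 := by
  intro φ hφ
  let I (w : Pt n → ℝ) (p : Pt n) : ℝ :=
    pdT w p * φ p + coeffForm a p (spaceGrad φ p) (spaceGrad w p) - oddPow q (w p) * φ p
  have hI {w : Pt n → ℝ} (hw : ContDiffOn ℝ 1 w (halfSpace n)) : IntegrableOn (I w) (halfSpace n) :=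
    (integrable_weak_integrand ha hw ((continuous_oddPow hq).comp_continuousOn hw.continuousOn)
      (by simp) hφ).integrableOn
  have hIu : 0 ≤ ∫ p in halfSpace n, I u p :=
    hsup φ hφ.contDiff hφ.hasCompactSupport hφ.tsupport_subset hφ.nonneg
  have hIv : ∫ p in halfSpace n, I v p ≤ 0 :=
    hsub φ hφ.contDiff hφ.hasCompactSupport hφ.tsupport_subset hφ.nonneg
  have hdiff : 0 ≤ ∫ p in halfSpace n, (I u p - I v p) / 2 := by
    rw [integral_div, integral_sub (hI hu) (hI hv)]
    linarith
  refine hdiff.trans_eq (setIntegral_congr_fun (isOpen_halfSpace n).measurableSet fun p hp => ?_)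
  have hnhds := (isOpen_halfSpace n).mem_nhds hp
  have hderiv : HasFDerivAt (fun p => (u p - v p) / 2)
      ((1 / 2 : ℝ) • fderiv ℝ u p + (-1 / 2 : ℝ) • fderiv ℝ v p) p := by
    have hu' := ((hu.contDiffAt hnhds).differentiableAt one_ne_zero).hasFDerivAt
    have hv' := ((hv.contDiffAt hnhds).differentiableAt one_ne_zero).hasFDerivAt
    refine ((hu'.const_smul (1 / 2 : ℝ)).add (hv'.const_smul (-1 / 2 : ℝ))).congr_of_eventuallyEq
      (.of_forall fun x => ?_)
    simp only [Pi.add_apply, Pi.smul_apply, smul_eq_mul]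
    ring
  beta_reduce
  rw [pdT_eq_of_hasFDerivAt hderiv, spaceGrad_eq_of_hasFDerivAt hderiv]
  simp only [I, map_add, map_smul, smul_eq_mul]
  ring

end Parabolic

/-! ### Energy estimates -/

section Energy

variable {n : ℕ} {a : Fin n → Fin n → Pt n → ℝ} {g h F ψ : Pt n → ℝ} {E : Set (Pt n)} {p : Pt n}
  {d D V β ν s : ℝ} {m : ℕ}

/-- A cut-off function `0 ≤ ψ ≤ 1` supported in a set of measure at most `V`, whose decay in time
and squared gradient, measured with the coefficients, are at most `D` and confined to `E`. -/
structure IsCutoff (a : Fin n → Fin n → Pt n → ℝ) (D V : ℝ) (E : Set (Pt n)) (ψ : Pt n → ℝ) :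
    Prop extends IsTestFunction 1 (halfSpace n) ψ where
  le_one : ∀ p, ψ p ≤ 1
  volume_support_le : volume ψ.support ≤ ENNReal.ofReal V
  measurableSet : MeasurableSet E
  subset_halfSpace : E ⊆ halfSpace n
  neg_pdT_le : ∀ p, -pdT ψ p ≤ E.indicator (fun _ => D) p
  form_le : ∀ᵐ p ∂(volume.restrict (halfSpace n)),
    coeffForm a p (spaceGrad ψ p) (spaceGrad ψ p) ≤ E.indicator (fun _ => D) p

/-- The weighted energy density `h^(-ν-1) ψ^(m+2) ∑ a_{ij} ∂_i h ∂_j h`. -/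
def energyDensity (a : Fin n → Fin n → Pt n → ℝ) (ν : ℝ) (m : ℕ) (h ψ : Pt n → ℝ) (p : Pt n) : ℝ :=
  h p ^ (-ν - 1) * ψ p ^ (m + 2) * coeffForm a p (spaceGrad h p) (spaceGrad h p)

lemma hasFDerivAt_rpow_mul_pow (hh : DifferentiableAt ℝ h p) (hh0 : h p ≠ 0)
    (hψ : DifferentiableAt ℝ ψ p) (β : ℝ) (m : ℕ) :
    HasFDerivAt (fun x => h x ^ β * ψ x ^ (m + 2))
      ((β * h p ^ (β - 1) * ψ p ^ (m + 2)) • fderiv ℝ h p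
        + ((m + 2) * h p ^ β * ψ p ^ (m + 1)) • fderiv ℝ ψ p) p := by
  refine ((hh.hasFDerivAt.rpow_const (.inl hh0)).mul
    (hψ.hasFDerivAt.pow (m + 2))).congr_fderiv ?_
  ext x <;>
  · simp only [ContinuousLinearMap.comp_apply, add_apply, smul_apply, smul_eq_mul, nsmul_eq_mul]
    push_cast
    ring_nf

lemma integrable_pdT (hF : ContDiff ℝ 1 F) (hFc : HasCompactSupport F) : Integrable (pdT F) :=
  ((hF.continuous_fderiv one_ne_zero).clm_apply continuous_const).integrable_of_hasCompactSupport
    (hFc.fderiv_apply ℝ (1, 0))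

lemma setIntegral_pdT_eq_zero (hF : ContDiff ℝ 1 F) (hFc : HasCompactSupport F)
    (hFS : tsupport F ⊆ halfSpace n) : ∫ p in halfSpace n, pdT F p = 0 := by
  rw [setIntegral_eq_integral_of_forall_compl_eq_zero fun p hp => by
    rw [pdT, fderiv_of_notMem_tsupport ℝ fun h => hp (hFS h)]; rfl]
  have hparts := integral_mul_fderiv_eq_neg_fderiv_mul_of_integrable
    (μ := (volume : Measure (Pt n))) (f := fun _ => (1 : ℝ)) (g := F) (v := (1, 0)) (by simp)
    (by simp only [one_mul]; exact integrable_pdT hF hFc)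
    (by simp only [one_mul]; exact hF.continuous.integrable_of_hasCompactSupport hFc)
    (fun x _ => differentiableAt_const _) fun x _ => hF.differentiable one_ne_zero x
  simpa [pdT] using hparts

lemma contDiffOn_rpow (hh : ContDiffOn ℝ 1 h (halfSpace n)) (hh0 : ∀ p ∈ halfSpace n, 0 < h p)
    (β : ℝ) : ContDiffOn ℝ 1 (fun p => h p ^ β) (halfSpace n) :=
  hh.rpow_const_of_ne fun p hp => (hh0 p hp).ne'

lemma integrable_energyDensity (ha : ∀ i j, LocallyIntegrableOn (a i j) (halfSpace n))
    (hh : ContDiffOn ℝ 1 h (halfSpace n)) (hh0 : ∀ p ∈ halfSpace n, 0 < h p)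
    (hψ : IsTestFunction 1 (halfSpace n) ψ) (ν : ℝ) (m : ℕ) :
    Integrable (energyDensity a ν m h ψ) := by
  have hweight : ContinuousOn (fun p => h p ^ (-ν - 1) * ψ p ^ (m + 2)) (halfSpace n) :=
    (contDiffOn_rpow hh hh0 _).continuousOn.mul (hψ.contDiff.continuous.pow _).continuousOn
  refine (integrable_coeffForm ha (hweight.smul (continuousOn_spaceGrad hh))
    (continuousOn_spaceGrad hh) hψ.hasCompactSupport hψ.tsupport_subset
    (Function.support_subset_iff'.2 fun p hp => ?_)).congr (.of_forall fun p => ?_)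
  · simp [image_eq_zero_of_notMem_tsupport hp]
  · simp only [Pi.smul_apply', map_smul, LinearMap.smul_apply, smul_eq_mul, energyDensity]

lemma cross_term_le (hB : (coeffForm a p).IsPosSemidef) (hh0 : 0 < h p) (hψ0 : 0 ≤ ψ p)
    (hs : 0 < s) (β ν : ℝ) (m : ℕ) :
    (m + 2) * h p ^ β * ψ p ^ (m + 1) * coeffForm a p (spaceGrad ψ p) (spaceGrad h p) ≤
      s * energyDensity a ν m h ψ p + (m + 2) ^ 2 / (4 * s) * h p ^ (2 * β + ν + 1) * ψ p ^ m
        * coeffForm a p (spaceGrad ψ p) (spaceGrad ψ p) := by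
  have hsq := isPosSemidef_two_mul_apply_le hB ((m + 2) * h p ^ (β + ν + 1)) (2 * s * ψ p)
    (spaceGrad ψ p) (spaceGrad h p)
  have hweight : 0 ≤ h p ^ (-ν - 1) * ψ p ^ m / (4 * s) := by positivity
  have hβ : h p ^ (-ν - 1) * h p ^ (β + ν + 1) = h p ^ β := by
    rw [← rpow_add hh0]; ring_nf
  have hβ' : h p ^ β * h p ^ (β + ν + 1) = h p ^ (2 * β + ν + 1) := by
    rw [← rpow_add hh0]; ring_nf
  have hscaled := mul_le_mul_of_nonneg_left hsq hweight
  rw [energyDensity, ← hβ', ← hβ]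
  field_simp at hscaled ⊢
  ring_nf at hscaled ⊢
  exact hscaled

lemma pdT_mul_add_coeffForm_le (hB : (coeffForm a p).IsPosSemidef)
    (hh : DifferentiableAt ℝ h p) (hh0 : 0 < h p) (hψ : DifferentiableAt ℝ ψ p) (hψ0 : 0 ≤ ψ p)
    (hψ1 : ψ p ≤ 1) (hψt : -pdT ψ p ≤ d) (hψx : coeffForm a p (spaceGrad ψ p) (spaceGrad ψ p) ≤ d)
    (hβ : -1 < β) (hβν : β = -ν ∨ β = 0) (hs : 0 < s) (m : ℕ) :
    pdT h p * (h p ^ β * ψ p ^ (m + 2))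
        + coeffForm a p (spaceGrad (fun x => h x ^ β * ψ x ^ (m + 2)) p) (spaceGrad h p) ≤
      pdT (fun x => h x ^ (1 + β) * ψ x ^ (m + 2)) p / (1 + β)
        + ((β + s) * energyDensity a ν m h ψ p
          + ((m + 2) ^ 2 / (4 * s) * h p ^ (2 * β + ν + 1) + (m + 2) / (1 + β) * h p ^ (1 + β))
            * ψ p ^ m * d) := by
  have hβ1 : 0 < 1 + β := by linarith
  have hd : 0 ≤ d := (hB.nonneg _).trans hψx
  -- if `β = -ν`, `h ^ (β - 1)` is the weight in `energyDensity`; if `β = 0`, the term drops out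
  have henergy : β * h p ^ (β - 1) * ψ p ^ (m + 2) * coeffForm a p (spaceGrad h p) (spaceGrad h p)
      = β * energyDensity a ν m h ψ p := by
    rw [energyDensity]
    rcases hβν with rfl | rfl <;> ring
  have hcross : (m + 2) * h p ^ β * ψ p ^ (m + 1) * coeffForm a p (spaceGrad ψ p) (spaceGrad h p) ≤
      s * energyDensity a ν m h ψ p
        + (m + 2) ^ 2 / (4 * s) * h p ^ (2 * β + ν + 1) * ψ p ^ m * d :=
    (cross_term_le hB hh0 hψ0 hs β ν m).trans (by gcongr)
  have htime : (m + 2) / (1 + β) * h p ^ (1 + β) * ψ p ^ (m + 1) * -pdT ψ p ≤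
      (m + 2) / (1 + β) * h p ^ (1 + β) * ψ p ^ m * d := by
    have hpow : ψ p ^ (m + 1) ≤ ψ p ^ m := pow_le_pow_of_le_one hψ0 hψ1 (by lia)
    calc _ ≤ (m + 2) / (1 + β) * h p ^ (1 + β) * ψ p ^ (m + 1) * d := by gcongr
      _ ≤ _ := by gcongr
  have hsplit : pdT (fun x => h x ^ (1 + β) * ψ x ^ (m + 2)) p / (1 + β) =
      pdT h p * (h p ^ β * ψ p ^ (m + 2))
        + (m + 2) / (1 + β) * h p ^ (1 + β) * ψ p ^ (m + 1) * pdT ψ p := by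
    rw [pdT_eq_of_hasFDerivAt (hasFDerivAt_rpow_mul_pow hh hh0.ne' hψ (1 + β) m),
      add_sub_cancel_left]
    field_simp
  rw [spaceGrad_eq_of_hasFDerivAt (hasFDerivAt_rpow_mul_pow hh hh0.ne' hψ β m), map_add, map_smul,
    map_smul, LinearMap.add_apply, LinearMap.smul_apply, LinearMap.smul_apply, smul_eq_mul,
    smul_eq_mul, henergy]
  linarith

lemma IsTestFunction.rpow_mul_pow (hψ : IsTestFunction 1 (halfSpace n) ψ)
    (hh : ContDiffOn ℝ 1 h (halfSpace n)) (hh0 : ∀ p ∈ halfSpace n, 0 < h p) (θ : ℝ) {k : ℕ}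
    (hk : k ≠ 0) : IsTestFunction 1 (halfSpace n) fun p => h p ^ θ * ψ p ^ k :=
  (hψ.pow hk).mul_of_nonneg (isOpen_halfSpace n) (contDiffOn_rpow hh hh0 θ) fun p hp =>
    (rpow_pos_of_pos (hh0 p hp) θ).le

lemma IsTestFunction.integrable_rpow_mul_pow (hψ : IsTestFunction 1 (halfSpace n) ψ)
    (hh : ContDiffOn ℝ 1 h (halfSpace n)) (hh0 : ∀ p ∈ halfSpace n, 0 < h p) (θ : ℝ) {k : ℕ}
    (hk : k ≠ 0) : Integrable fun p => h p ^ θ * ψ p ^ k :=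
  (hψ.rpow_mul_pow hh hh0 θ hk).contDiff.continuous.integrable_of_hasCompactSupport
    (hψ.rpow_mul_pow hh hh0 θ hk).hasCompactSupport

lemma IsCutoff.setIntegral_source_le (hψ : IsCutoff a D V E ψ)
    (ha : ∀ i j, LocallyIntegrableOn (a i j) (halfSpace n))
    (hB : ∀ᵐ p ∂(volume.restrict (halfSpace n)), (coeffForm a p).IsPosSemidef)
    (hh : ContDiffOn ℝ 1 h (halfSpace n)) (hh0 : ∀ p ∈ halfSpace n, 0 < h p)
    (hg : ContinuousOn g (halfSpace n)) (hhg : WeakParabolicIneq 1 a h g)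
    (hβ : -1 < β) (hβν : β = -ν ∨ β = 0) (hs : 0 < s) (hm : m ≠ 0) :
    ∫ p in halfSpace n, g p * (h p ^ β * ψ p ^ (m + 2)) ≤
      (β + s) * (∫ p in halfSpace n, energyDensity a ν m h ψ p)
        + ((m + 2) ^ 2 / (4 * s) * (∫ p in E, h p ^ (2 * β + ν + 1) * ψ p ^ m)
          + (m + 2) / (1 + β) * ∫ p in E, h p ^ (1 + β) * ψ p ^ m) * D := by
  have hS := (isOpen_halfSpace n).measurableSet
  have hφ := hψ.rpow_mul_pow hh hh0 β (k := m + 2) (by lia)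
  have hF := hψ.rpow_mul_pow hh hh0 (1 + β) (k := m + 2) (by lia)
  have hint (θ : ℝ) := hψ.integrable_rpow_mul_pow hh hh0 θ hm
  let φ (p : Pt n) : ℝ := h p ^ β * ψ p ^ (m + 2)
  let T (p : Pt n) : ℝ := pdT (fun x => h x ^ (1 + β) * ψ x ^ (m + 2)) p / (1 + β)
  let X (p : Pt n) : ℝ := (β + s) * energyDensity a ν m h ψ p
  let G (p : Pt n) : ℝ := ((m + 2) ^ 2 / (4 * s) * (h p ^ (2 * β + ν + 1) * ψ p ^ m)
    + (m + 2) / (1 + β) * (h p ^ (1 + β) * ψ p ^ m)) * D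
  have hT : IntegrableOn T (halfSpace n) :=
    ((integrable_pdT hF.contDiff hF.hasCompactSupport).div_const _).integrableOn
  have hX : IntegrableOn X (halfSpace n) :=
    ((integrable_energyDensity ha hh hh0 hψ.toIsTestFunction ν m).const_mul _).integrableOn
  have hG : IntegrableOn (E.indicator G) (halfSpace n) :=
    (((((hint _).const_mul _).add ((hint _).const_mul _)).mul_const D).indicator
      hψ.measurableSet).integrableOn
  have hpointwise : ∀ᵐ p ∂(volume.restrict (halfSpace n)),
      pdT h p * φ p + coeffForm a p (spaceGrad φ p) (spaceGrad h p) ≤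
        (T + (X + E.indicator G)) p := by
    filter_upwards [hB, hψ.form_le, ae_restrict_mem hS] with p hBp hψx hp
    have hle := pdT_mul_add_coeffForm_le hBp
      ((hh.contDiffAt ((isOpen_halfSpace n).mem_nhds hp)).differentiableAt one_ne_zero) (hh0 p hp)
      (hψ.contDiff.differentiable one_ne_zero p) (hψ.nonneg p) (hψ.le_one p) (hψ.neg_pdT_le p) hψx
      hβ hβν hs m
    by_cases hpE : p ∈ E <;>
    · simp only [Pi.add_apply, hpE, Set.indicator_of_mem, Set.indicator_of_notMem,
        not_false_eq_true] at hle ⊢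
      simp only [φ, T, X, G]
      linarith
  have hle := hhg.setIntegral_mul_le ha hh hg le_rfl hφ (hT.add (hX.add hG)) hpointwise
  rw [integral_add' hT (hX.add hG), integral_add' hX hG,
    integral_div, integral_const_mul,
    setIntegral_pdT_eq_zero hF.contDiff hF.hasCompactSupport hF.tsupport_subset,
    setIntegral_indicator hψ.measurableSet, Set.inter_eq_right.2 hψ.subset_halfSpace,
    integral_mul_const, integral_add ((hint _).const_mul _).integrableOn
      ((hint _).const_mul _).integrableOn, integral_const_mul, integral_const_mul, zero_div,
    zero_add] at hle
  exact hle

end Energy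

/-! ### Integral estimates for nonnegative supersolutions -/

section Supersolution

open Filter Topology

variable {n : ℕ} {a : Fin n → Fin n → Pt n → ℝ} {w h ψ : Pt n → ℝ} {E : Set (Pt n)}
  {D V ε ν q s C₁ C₂ : ℝ} {m : ℕ}

lemma rpow_sub_rpow_le_rpow_mul_rpow_neg {x : ℝ} (hq : 1 ≤ q) (hν : 0 ≤ ν) (hx : 0 ≤ x)
    (hε : 0 < ε) :
    2 ^ (1 - q) * (x + ε) ^ (q - ν) - ε ^ (q - ν) ≤ x ^ q * (x + ε) ^ (-ν) := by
  have hxε : 0 < x + ε := by linarith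
  have hsum : 2 ^ (1 - q) * (x + ε) ^ q ≤ x ^ q + ε ^ q := by
    calc 2 ^ (1 - q) * (x + ε) ^ q
        ≤ 2 ^ (1 - q) * (2 ^ (q - 1) * (x ^ q + ε ^ q)) := by
          gcongr
          exact add_rpow_le_two_rpow_mul hq hx hε.le
      _ = x ^ q + ε ^ q := by
          rw [← mul_assoc, ← rpow_add two_pos, sub_add_sub_cancel, sub_self, rpow_zero, one_mul]
  have hε_pow : ε ^ q * (x + ε) ^ (-ν) ≤ ε ^ (q - ν) := by
    rw [sub_eq_add_neg, rpow_add hε]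
    exact mul_le_mul_of_nonneg_left
      (rpow_le_rpow_of_nonpos hε (le_add_of_nonneg_left hx) (neg_nonpos.2 hν)) (by positivity)
  calc 2 ^ (1 - q) * (x + ε) ^ (q - ν) - ε ^ (q - ν)
      ≤ 2 ^ (1 - q) * (x + ε) ^ q * (x + ε) ^ (-ν) - ε ^ q * (x + ε) ^ (-ν) := by
        rw [mul_assoc, ← rpow_add hxε, ← sub_eq_add_neg]
        linarith
    _ ≤ (x ^ q + ε ^ q) * (x + ε) ^ (-ν) - ε ^ q * (x + ε) ^ (-ν) := by gcongr
    _ = x ^ q * (x + ε) ^ (-ν) := by ring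

/-- A nonnegative weak solution of `w_t ≥ Lw + w^q` in the half-space. -/
structure IsNonnegSupersol (a : Fin n → Fin n → Pt n → ℝ) (q : ℝ) (w : Pt n → ℝ) : Prop where
  contDiffOn : ContDiffOn ℝ 1 w (halfSpace n)
  nonneg : ∀ p ∈ halfSpace n, 0 ≤ w p
  weakIneq : WeakParabolicIneq 1 a w fun p => w p ^ q

lemma IsNonnegSupersol.continuousOn_rpow (hw : IsNonnegSupersol a q w) (hq : 0 ≤ q) :
    ContinuousOn (fun p => w p ^ q) (halfSpace n) :=
  hw.contDiffOn.continuousOn.rpow_const fun _ _ => .inr hq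

lemma IsNonnegSupersol.contDiffOn_add_const (hw : IsNonnegSupersol a q w) (ε : ℝ) :
    ContDiffOn ℝ 1 (fun p => w p + ε) (halfSpace n) :=
  hw.contDiffOn.add contDiffOn_const

lemma IsNonnegSupersol.add_const_pos (hw : IsNonnegSupersol a q w) (hε : 0 < ε) :
    ∀ p ∈ halfSpace n, 0 < w p + ε :=
  fun p hp => add_pos_of_nonneg_of_pos (hw.nonneg p hp) hε

namespace IsCutoff

lemma setIntegral_pow_le (hψ : IsCutoff a D V E ψ) (hV : 0 ≤ V) (hm : m ≠ 0) (U : Set (Pt n)) :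
    ∫ p in U, ψ p ^ m ≤ V := by
  have hint : Integrable fun p => ψ p ^ m :=
    ((hψ.pow hm).contDiff.continuous.integrable_of_hasCompactSupport (hψ.pow hm).hasCompactSupport)
  calc ∫ p in U, ψ p ^ m ≤ ∫ p, ψ p ^ m :=
        setIntegral_le_integral hint (.of_forall fun p => pow_nonneg (hψ.nonneg p) m)
    _ = ∫ p in ψ.support, ψ p ^ m :=
        (setIntegral_eq_integral_of_forall_compl_eq_zero fun p hp => by
          rw [Function.notMem_support.1 hp, zero_pow hm]).symm
    _ ≤ ‖∫ p in ψ.support, ψ p ^ m‖ := le_norm_self _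
    _ ≤ 1 * volume.real ψ.support := norm_setIntegral_le_of_norm_le_const
        (hψ.volume_support_le.trans_lt ENNReal.ofReal_lt_top) fun p _ => by
          rw [norm_of_nonneg (pow_nonneg (hψ.nonneg p) m)]
          exact pow_le_one₀ (hψ.nonneg p) (hψ.le_one p)
    _ ≤ V := by
        rw [one_mul]
        exact ENNReal.toReal_le_of_le_ofReal hV hψ.volume_support_le

lemma setIntegral_rpow_mul_pow_le (hψ : IsCutoff a D V E ψ) (hV : 0 ≤ V)
    (hh : ContDiffOn ℝ 1 h (halfSpace n)) (hh0 : ∀ p ∈ halfSpace n, 0 < h p) {k : ℝ} (hk : 0 ≤ k)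
    (hs : 0 < s) (hks : k ≤ s) (hm : m ≠ 0) (hms : (m + 2) * k ≤ m * s) :
    ∫ p in E, h p ^ k * ψ p ^ m ≤
      (∫ p in E, h p ^ s * ψ p ^ (m + 2)) ^ (k / s) * V ^ (1 - k / s) :=
  integral_rpow_mul_pow_le hV
    ((Measure.restrict_apply_le _ _).trans hψ.volume_support_le) hψ.nonneg hψ.le_one
    ((ae_restrict_mem hψ.measurableSet).mono fun p hp => (hh0 p (hψ.subset_halfSpace hp)).le)
    (hψ.integrable_rpow_mul_pow hh hh0 s (by lia)).integrableOn hk hs hks hm (by exact_mod_cast hms)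

lemma le_setIntegral_source (hψ : IsCutoff a D V E ψ) (hV : 0 ≤ V) (hq : 1 ≤ q) (hν : 0 ≤ ν)
    (hε : 0 < ε) (hw : IsNonnegSupersol a q w) (m : ℕ) :
    2 ^ (1 - q) * (∫ p in halfSpace n, (w p + ε) ^ (q - ν) * ψ p ^ (m + 2)) - ε ^ (q - ν) * V ≤
      ∫ p in halfSpace n, w p ^ q * ((w p + ε) ^ (-ν) * ψ p ^ (m + 2)) := by
  have hS := (isOpen_halfSpace n).measurableSet
  have hh := hw.contDiffOn_add_const ε
  have hh0 := hw.add_const_pos hε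
  have hh_int : IntegrableOn (fun p => 2 ^ (1 - q) * ((w p + ε) ^ (q - ν) * ψ p ^ (m + 2)))
      (halfSpace n) :=
    ((hψ.integrable_rpow_mul_pow hh hh0 _ (by lia)).const_mul _).integrableOn
  have hψ_int : IntegrableOn (fun p => ε ^ (q - ν) * ψ p ^ (m + 2)) (halfSpace n) :=
    (((hψ.pow (m := m + 2) (by lia)).contDiff.continuous.integrable_of_hasCompactSupport
      (hψ.pow (by lia)).hasCompactSupport).const_mul _).integrableOn
  have hsource_int : IntegrableOn (fun p => w p ^ q * ((w p + ε) ^ (-ν) * ψ p ^ (m + 2)))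
      (halfSpace n) :=
    (integrable_mul_isTestFunction ((hw.continuousOn_rpow (by linarith)).locallyIntegrableOn hS)
      (hψ.rpow_mul_pow hh hh0 (-ν) (by lia))).integrableOn
  calc _ ≤ 2 ^ (1 - q) * (∫ p in halfSpace n, (w p + ε) ^ (q - ν) * ψ p ^ (m + 2))
        - ε ^ (q - ν) * ∫ p in halfSpace n, ψ p ^ (m + 2) := by
        gcongr
        exact hψ.setIntegral_pow_le hV (by lia) _
    _ = ∫ p in halfSpace n, (2 ^ (1 - q) * ((w p + ε) ^ (q - ν) * ψ p ^ (m + 2))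
          - ε ^ (q - ν) * ψ p ^ (m + 2)) := by
        rw [integral_sub hh_int hψ_int, integral_const_mul, integral_const_mul]
    _ ≤ _ := setIntegral_mono_on (hh_int.sub hψ_int) hsource_int hS fun p hp => by
        rw [← mul_assoc, ← mul_assoc, ← sub_mul]
        exact mul_le_mul_of_nonneg_right
          (rpow_sub_rpow_le_rpow_mul_rpow_neg hq hν (hw.nonneg p hp) hε)
          (pow_nonneg (hψ.nonneg p) _)

/-- Testing with `(w + ε) ^ (-ν) * ψ ^ (m + 2)` makes the energy appear with a favourable sign. -/
lemma half_energy_add_source_le (hψ : IsCutoff a D V E ψ) (hD : 0 ≤ D) (hV : 0 ≤ V) (hq : 1 < q)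
    (hν0 : 0 < ν) (hν1 : ν < 1) (hm : m ≠ 0) (hmq : (m + 2) * (1 + ν) ≤ m * q) (hε : 0 < ε)
    (ha : ∀ i j, LocallyIntegrableOn (a i j) (halfSpace n))
    (hB : ∀ᵐ p ∂(volume.restrict (halfSpace n)), (coeffForm a p).IsPosSemidef)
    (hw : IsNonnegSupersol a q w) :
    let Y := ∫ p in halfSpace n, (w p + ε) ^ (q - ν) * ψ p ^ (m + 2)
    ν / 2 * (∫ p in halfSpace n, energyDensity a ν m (fun p => w p + ε) ψ p) + 2 ^ (1 - q) * Y ≤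
      ((m + 2) ^ 2 / (2 * ν) + (m + 2) / (1 - ν))
          * (Y ^ ((1 - ν) / (q - ν)) * V ^ (1 - (1 - ν) / (q - ν))) * D + ε ^ (q - ν) * V := by
  intro Y
  have hν1' : 0 < 1 - ν := by linarith
  have hm0 : 0 ≤ m * ν := by positivity
  let h (p : Pt n) : ℝ := w p + ε
  have hh : ContDiffOn ℝ 1 h (halfSpace n) := hw.contDiffOn_add_const ε
  have hh0 : ∀ p ∈ halfSpace n, 0 < h p := hw.add_const_pos hε
  have hφ := hψ.rpow_mul_pow hh hh0 (q - ν) (k := m + 2) (by lia)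
  have hφ_int := hψ.integrable_rpow_mul_pow hh hh0 (q - ν) (k := m + 2) (by lia)
  have htest := hψ.setIntegral_source_le ha hB hh hh0 (hw.continuousOn_rpow (by linarith))
    (hw.weakIneq.add_const ε) (β := -ν) (ν := ν) (by linarith) (.inl rfl) (half_pos hν0) hm
  have hsource : 2 ^ (1 - q) * Y - ε ^ (q - ν) * V ≤
      ∫ p in halfSpace n, w p ^ q * (h p ^ (-ν) * ψ p ^ (m + 2)) :=
    hψ.le_setIntegral_source hV hq.le hν0.le hε hw m
  have hjensen : ∫ p in E, h p ^ (1 - ν) * ψ p ^ m ≤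
      Y ^ ((1 - ν) / (q - ν)) * V ^ (1 - (1 - ν) / (q - ν)) := by
    refine (hψ.setIntegral_rpow_mul_pow_le (s := q - ν) hV hh hh0 hν1'.le (by linarith)
      (by linarith) hm (by linarith)).trans ?_
    gcongr
    · exact integral_nonneg hφ.nonneg
    · exact div_nonneg hν1'.le (by linarith)
    · exact setIntegral_mono_set hφ_int.integrableOn (.of_forall hφ.nonneg)
        (.of_forall hψ.subset_halfSpace)
  have hscaled : ((m + 2) ^ 2 / (2 * ν) + (m + 2) / (1 - ν)) * (∫ p in E, h p ^ (1 - ν) * ψ p ^ m)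
      * D ≤ _ := mul_le_mul_of_nonneg_right (mul_le_mul_of_nonneg_left hjensen (by positivity)) hD
  rw [show 2 * -ν + ν + 1 = 1 - ν by ring, ← sub_eq_add_neg,
    show 4 * (ν / 2) = 2 * ν by ring] at htest
  linarith

lemma exists_energy_le (hq : 1 < q) (hν0 : 0 < ν) (hν1 : ν < 1) (hm : m ≠ 0)
    (hmq : (m + 2) * (1 + ν) ≤ m * q) (ha : ∀ i j, LocallyIntegrableOn (a i j) (halfSpace n))
    (hB : ∀ᵐ p ∂(volume.restrict (halfSpace n)), (coeffForm a p).IsPosSemidef)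
    (hw : IsNonnegSupersol a q w) :
    ∃ K, 0 ≤ K ∧ ∀ {D V ε : ℝ} {E : Set (Pt n)} {ψ : Pt n → ℝ}, 0 ≤ D → 0 ≤ V → 0 < ε →
      IsCutoff a D V E ψ → ∫ p in halfSpace n, energyDensity a ν m (fun p => w p + ε) ψ p ≤
        K * (V * (D ^ ((q - ν) / (q - 1)) + ε ^ (q - ν))) := by
  have hqν : 0 < q - ν := by linarith
  have hν1' : 0 < 1 - ν := by linarith
  obtain ⟨M, hM0, hyoung⟩ := exists_rpow_mul_rpow_mul_le_mul_add (div_nonneg hν1'.le hqν.le)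
    ((div_lt_one hqν).2 (by linarith)) (rpow_pos_of_pos two_pos (1 - q))
  have hexp : 1 / (1 - (1 - ν) / (q - ν)) = (q - ν) / (q - 1) := by
    rw [one_sub_div hqν.ne', one_div_div]
    ring
  rw [hexp] at hyoung
  let C : ℝ := (m + 2) ^ 2 / (2 * ν) + (m + 2) / (1 - ν)
  have hC : 0 ≤ C := by positivity
  refine ⟨2 / ν * (M * C ^ ((q - ν) / (q - 1)) + 1), by positivity,
    fun {D V ε E ψ} hD hV hε hψ => ?_⟩
  let X : ℝ := ∫ p in halfSpace n, energyDensity a ν m (fun p => w p + ε) ψ p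
  let Y : ℝ := ∫ p in halfSpace n, (w p + ε) ^ (q - ν) * ψ p ^ (m + 2)
  have hY0 : 0 ≤ Y := integral_nonneg (hψ.rpow_mul_pow (hw.contDiffOn_add_const ε)
    (hw.add_const_pos hε) (q - ν) (by lia)).nonneg
  have habsorb := hyoung Y V (C * D) hY0 hV (by positivity)
  have henergy : ν / 2 * X + 2 ^ (1 - q) * Y ≤ C * (Y ^ ((1 - ν) / (q - ν))
      * V ^ (1 - (1 - ν) / (q - ν))) * D + ε ^ (q - ν) * V :=
    hψ.half_energy_add_source_le hD hV hq hν0 hν1 hm hmq hε ha hB hw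
  rw [mul_rpow hC hD] at habsorb
  have hX : X ≤ 2 / ν * (M * (V * (C ^ ((q - ν) / (q - 1)) * D ^ ((q - ν) / (q - 1))))
      + ε ^ (q - ν) * V) := by
    rw [div_mul_eq_mul_div, le_div_iff₀ hν0]
    linarith
  have hrest : 0 ≤ 2 / ν * (V * (M * C ^ ((q - ν) / (q - 1)) * ε ^ (q - ν)
      + D ^ ((q - ν) / (q - 1)))) := by positivity
  linarith

lemma source_le_energy_add (hψ : IsCutoff a D V E ψ) (hD : 0 ≤ D) (hV : 0 ≤ V) (hq : 1 < q)
    (hν0 : 0 < ν) (hm : m ≠ 0) (hmq : (m + 2) * (1 + ν) ≤ m * q) (hε : 0 < ε) (hs : 0 < s)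
    (ha : ∀ i j, LocallyIntegrableOn (a i j) (halfSpace n))
    (hB : ∀ᵐ p ∂(volume.restrict (halfSpace n)), (coeffForm a p).IsPosSemidef)
    (hw : IsNonnegSupersol a q w) :
    let J := ∫ p in E, (w p + ε) ^ q * ψ p ^ (m + 2)
    ∫ p in halfSpace n, w p ^ q * ψ p ^ (m + 2) ≤
      s * (∫ p in halfSpace n, energyDensity a ν m (fun p => w p + ε) ψ p)
        + ((m + 2) ^ 2 / (4 * s) * (J ^ ((1 + ν) / q) * V ^ (1 - (1 + ν) / q))
          + (m + 2) * (J ^ (1 / q) * V ^ (1 - 1 / q))) * D := by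
  intro J
  have hνq : 1 + ν ≤ q := le_of_mul_le_mul_left (by linarith : m * (1 + ν) ≤ m * q) (by positivity)
  have htest := hψ.setIntegral_source_le ha hB (hw.contDiffOn_add_const ε) (hw.add_const_pos hε)
    (hw.continuousOn_rpow (by linarith)) (hw.weakIneq.add_const ε) (β := 0) (ν := ν) (by simp)
    (.inr rfl) hs hm
  have hjensen {k : ℝ} (hk : 0 ≤ k) (hkν : k ≤ 1 + ν) :
      ∫ p in E, (w p + ε) ^ k * ψ p ^ m ≤ J ^ (k / q) * V ^ (1 - k / q) :=
    hψ.setIntegral_rpow_mul_pow_le hV (hw.contDiffOn_add_const ε) (hw.add_const_pos hε) hk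
      (by linarith) (hkν.trans hνq) hm ((mul_le_mul_of_nonneg_left hkν (by positivity)).trans hmq)
  simp only [rpow_zero, one_mul, zero_add, mul_zero, add_zero, div_one, add_comm ν 1] at htest
  refine htest.trans ?_
  gcongr
  · exact hjensen (by linarith) le_rfl
  · exact hjensen zero_le_one (by linarith)

/-- The decay `N ^ (1 - q)` and the volume `N ^ q` are those of a cut-off at scale `R` with
`N = R ^ n` in the critical case `α = n * (q - 1)`. -/
lemma exists_energy_le_rpow (hq : 1 < q) (hν0 : 0 < ν) (hν1 : ν < 1) (hm : m ≠ 0)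
    (hmq : (m + 2) * (1 + ν) ≤ m * q) (ha : ∀ i j, LocallyIntegrableOn (a i j) (halfSpace n))
    (hB : ∀ᵐ p ∂(volume.restrict (halfSpace n)), (coeffForm a p).IsPosSemidef)
    (hw : IsNonnegSupersol a q w) (hC₁ : 0 ≤ C₁) (hC₂ : 0 ≤ C₂) :
    ∃ K, 0 ≤ K ∧ ∀ {N ε : ℝ} {E : Set (Pt n)} {ψ : Pt n → ℝ}, 0 < N → 0 < ε → ε ≤ N⁻¹ →
      IsCutoff a (C₁ * N ^ (1 - q)) (C₂ * N ^ q) E ψ →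
      ∫ p in halfSpace n, energyDensity a ν m (fun p => w p + ε) ψ p ≤ K * N ^ ν := by
  have hq1 : 0 < q - 1 := by linarith
  obtain ⟨K, hK0, hK⟩ := exists_energy_le hq hν0 hν1 hm hmq ha hB hw
  refine ⟨K * (C₂ * (C₁ ^ ((q - ν) / (q - 1)) + 1)), by positivity,
    fun {N ε E ψ} hN hε hεN hψ => ?_⟩
  have hD : (C₁ * N ^ (1 - q)) ^ ((q - ν) / (q - 1)) = C₁ ^ ((q - ν) / (q - 1)) * N ^ (ν - q) := by
    rw [mul_rpow hC₁ (by positivity), ← rpow_mul hN.le]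
    congr 2
    field_simp
    ring
  have hεpow : ε ^ (q - ν) ≤ N ^ (ν - q) := by
    rw [← neg_sub q ν, rpow_neg hN.le, ← inv_rpow hN.le]
    exact rpow_le_rpow hε.le hεN (by linarith)
  calc ∫ p in halfSpace n, energyDensity a ν m (fun p => w p + ε) ψ p
      ≤ K * (C₂ * N ^ q * ((C₁ * N ^ (1 - q)) ^ ((q - ν) / (q - 1)) + ε ^ (q - ν))) :=
        hK (by positivity) (by positivity) hε hψ
    _ ≤ K * (C₂ * N ^ q * (C₁ ^ ((q - ν) / (q - 1)) * N ^ (ν - q) + N ^ (ν - q))) := by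
        rw [hD]
        gcongr
    _ = K * (C₂ * (C₁ ^ ((q - ν) / (q - 1)) + 1)) * (N ^ q * N ^ (ν - q)) := by ring
    _ = K * (C₂ * (C₁ ^ ((q - ν) / (q - 1)) + 1)) * N ^ ν := by
        rw [← rpow_add hN, add_sub_cancel]

lemma exists_source_le_of_add_const (hq : 1 < q) (hν0 : 0 < ν) (hν1 : ν < 1) (hm : m ≠ 0)
    (hmq : (m + 2) * (1 + ν) ≤ m * q) (ha : ∀ i j, LocallyIntegrableOn (a i j) (halfSpace n))
    (hB : ∀ᵐ p ∂(volume.restrict (halfSpace n)), (coeffForm a p).IsPosSemidef)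
    (hw : IsNonnegSupersol a q w) (hC₁ : 0 ≤ C₁) (hC₂ : 0 ≤ C₂) :
    ∃ C, 0 ≤ C ∧ ∀ {N ε σ : ℝ} {E : Set (Pt n)} {ψ : Pt n → ℝ}, 0 < N → 0 < ε → ε ≤ N⁻¹ → 0 < σ →
      IsCutoff a (C₁ * N ^ (1 - q)) (C₂ * N ^ q) E ψ →
      ∫ p in halfSpace n, w p ^ q * ψ p ^ (m + 2) ≤
        C * (σ + (∫ p in E, (w p + ε) ^ q * ψ p ^ (m + 2)) ^ (1 / q)
          + (∫ p in E, (w p + ε) ^ q * ψ p ^ (m + 2)) ^ ((1 + ν) / q) / σ) := by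
  have hq0 : 0 < q := by linarith
  obtain ⟨K, hK0, hK⟩ := exists_energy_le_rpow hq hν0 hν1 hm hmq ha hB hw hC₁ hC₂
  let c₁ : ℝ := (m + 2) * C₂ ^ (1 - 1 / q) * C₁
  let c₂ : ℝ := (m + 2) ^ 2 / 4 * C₂ ^ (1 - (1 + ν) / q) * C₁
  have : 0 ≤ c₁ := by positivity
  have : 0 ≤ c₂ := by positivity
  refine ⟨K + c₁ + c₂, by positivity, fun {N ε σ E ψ} hN hε hεN hσ hψ => ?_⟩
  set J : ℝ := ∫ p in E, (w p + ε) ^ q * ψ p ^ (m + 2)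
  have hJ0 : 0 ≤ J := integral_nonneg (hψ.rpow_mul_pow (hw.contDiffOn_add_const ε)
    (hw.add_const_pos hε) q (by lia)).nonneg
  have hscale (k : ℝ) : (C₂ * N ^ q) ^ (1 - k / q) * (C₁ * N ^ (1 - q)) =
      C₂ ^ (1 - k / q) * C₁ * N ^ (1 - k) := by
    rw [mul_rpow hC₂ (by positivity), ← rpow_mul hN.le, mul_mul_mul_comm, ← rpow_add hN, mul_sub,
      mul_one, mul_div_cancel₀ _ hq0.ne', sub_add_sub_cancel']
  -- the energy is `O(N ^ ν)`, so weighting it by `s = σ * N ^ (-ν)` leaves a term `O(σ)`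
  calc ∫ p in halfSpace n, w p ^ q * ψ p ^ (m + 2)
      ≤ σ * N ^ (-ν) * (K * N ^ ν)
        + ((m + 2) ^ 2 / (4 * (σ * N ^ (-ν))) * (J ^ ((1 + ν) / q)
            * (C₂ * N ^ q) ^ (1 - (1 + ν) / q))
          + (m + 2) * (J ^ (1 / q) * (C₂ * N ^ q) ^ (1 - 1 / q))) * (C₁ * N ^ (1 - q)) := by
        refine (hψ.source_le_energy_add (by positivity) (by positivity) hq hν0 hm hmq hε
          (s := σ * N ^ (-ν)) (by positivity) ha hB hw).trans ?_
        gcongr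
        exact hK hN hε hεN hψ
    _ = K * σ + c₁ * J ^ (1 / q) + c₂ * (J ^ ((1 + ν) / q) / σ) := by
        simp only [add_mul, mul_assoc, hscale, c₁, c₂]
        rw [sub_self, rpow_zero, sub_add_cancel_left, rpow_neg hN.le]
        field_simp
        ring
    _ ≤ (K + c₁ + c₂) * (σ + J ^ (1 / q) + J ^ ((1 + ν) / q) / σ) := by
        have hJ1 : 0 ≤ J ^ (1 / q) := by positivity
        have hJ2 : 0 ≤ J ^ ((1 + ν) / q) / σ := by positivity
        rw [add_mul, add_mul]
        gcongr <;> linarith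

lemma setIntegral_add_const_rpow_le (hψ : IsCutoff a D V E ψ) (hV : 0 ≤ V) (hq : 1 ≤ q)
    (hε : 0 ≤ ε) (hw : IsNonnegSupersol a q w) (hm : m ≠ 0) :
    ∫ p in E, (w p + ε) ^ q * ψ p ^ m ≤
      2 ^ (q - 1) * ((∫ p in E, w p ^ q * ψ p ^ m) + ε ^ q * V) := by
  have hw_int : IntegrableOn (fun p => w p ^ q * ψ p ^ m) E :=
    (integrable_mul_isTestFunction ((hw.continuousOn_rpow (by linarith)).locallyIntegrableOn
      (isOpen_halfSpace n).measurableSet) (hψ.pow hm)).integrableOn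
  have hψ_int : IntegrableOn (fun p => ε ^ q * ψ p ^ m) E :=
    (((hψ.pow hm).contDiff.continuous.integrable_of_hasCompactSupport
      (hψ.pow hm).hasCompactSupport).const_mul _).integrableOn
  calc ∫ p in E, (w p + ε) ^ q * ψ p ^ m
      ≤ ∫ p in E, 2 ^ (q - 1) * (w p ^ q * ψ p ^ m + ε ^ q * ψ p ^ m) := by
        refine integral_mono_of_nonneg ?_ ((hw_int.add hψ_int).const_mul _) ?_ <;>
          filter_upwards [ae_restrict_mem hψ.measurableSet] with p hp <;>
          have hwp := hw.nonneg p (hψ.subset_halfSpace hp) <;>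
          have hψp := pow_nonneg (hψ.nonneg p) m
        · exact mul_nonneg (by positivity) hψp
        · rw [← add_mul, ← mul_assoc]
          exact mul_le_mul_of_nonneg_right (add_rpow_le_two_rpow_mul hq hwp hε) hψp
    _ = 2 ^ (q - 1) * ((∫ p in E, w p ^ q * ψ p ^ m) + ε ^ q * ∫ p in E, ψ p ^ m) := by
        rw [integral_const_mul, integral_add hw_int hψ_int, integral_const_mul]
    _ ≤ _ := by
        gcongr
        exact hψ.setIntegral_pow_le hV hm E

lemma exists_source_le (hq : 1 < q) (hν0 : 0 < ν) (hν1 : ν < 1) (hm : m ≠ 0)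
    (hmq : (m + 2) * (1 + ν) ≤ m * q) (ha : ∀ i j, LocallyIntegrableOn (a i j) (halfSpace n))
    (hB : ∀ᵐ p ∂(volume.restrict (halfSpace n)), (coeffForm a p).IsPosSemidef)
    (hw : IsNonnegSupersol a q w) (hC₁ : 0 ≤ C₁) (hC₂ : 0 ≤ C₂) :
    ∃ C, 0 ≤ C ∧ ∀ {N σ : ℝ} {E : Set (Pt n)} {ψ : Pt n → ℝ}, 0 < N → 0 < σ →
      IsCutoff a (C₁ * N ^ (1 - q)) (C₂ * N ^ q) E ψ →
      ∫ p in halfSpace n, w p ^ q * ψ p ^ (m + 2) ≤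
        C * (σ + (2 ^ (q - 1) * ∫ p in E, w p ^ q * ψ p ^ (m + 2)) ^ (1 / q)
          + (2 ^ (q - 1) * ∫ p in E, w p ^ q * ψ p ^ (m + 2)) ^ ((1 + ν) / q) / σ) := by
  obtain ⟨C, hC0, hC⟩ := exists_source_le_of_add_const hq hν0 hν1 hm hmq ha hB hw hC₁ hC₂
  refine ⟨C, hC0, fun {N σ E ψ} hN hσ hψ => ?_⟩
  set I : ℝ := ∫ p in E, w p ^ q * ψ p ^ (m + 2)
  have hq0 : 0 < q := by linarith
  have hbound : ∀ᶠ ε in 𝓝[>] 0, ∫ p in halfSpace n, w p ^ q * ψ p ^ (m + 2) ≤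
      C * (σ + (2 ^ (q - 1) * (I + ε ^ q * (C₂ * N ^ q))) ^ (1 / q)
        + (2 ^ (q - 1) * (I + ε ^ q * (C₂ * N ^ q))) ^ ((1 + ν) / q) / σ) := by
    filter_upwards [Ioc_mem_nhdsGT (inv_pos.2 hN)] with ε ⟨hε, hεN⟩
    have hJ := hψ.setIntegral_add_const_rpow_le (by positivity) hq.le hε.le hw
      (m := m + 2) (by lia)
    have hJ0 : 0 ≤ ∫ p in E, (w p + ε) ^ q * ψ p ^ (m + 2) :=
      integral_nonneg (hψ.rpow_mul_pow (hw.contDiffOn_add_const ε) (hw.add_const_pos hε) q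
        (by lia)).nonneg
    refine (hC hN hε hεN hσ hψ).trans ?_
    gcongr
  have hcont : ContinuousAt (fun ε : ℝ =>
      C * (σ + (2 ^ (q - 1) * (I + ε ^ q * (C₂ * N ^ q))) ^ (1 / q)
        + (2 ^ (q - 1) * (I + ε ^ q * (C₂ * N ^ q))) ^ ((1 + ν) / q) / σ)) 0 := by
    have hε : Continuous fun ε : ℝ => 2 ^ (q - 1) * (I + ε ^ q * (C₂ * N ^ q)) := by
      have := continuous_rpow_const hq0.le
      fun_prop
    have hpow {k : ℝ} (hk : 0 < k) := (hε.rpow_const fun _ => .inr (div_pos hk hq0).le :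
      Continuous fun ε : ℝ => (2 ^ (q - 1) * (I + ε ^ q * (C₂ * N ^ q))) ^ (k / q))
    exact (continuous_const.mul ((continuous_const.add (hpow one_pos)).add
      ((hpow (by linarith)).div_const σ))).continuousAt
  simpa only [zero_rpow hq0.ne', zero_mul, add_zero] using
    ge_of_tendsto (hcont.tendsto.mono_left nhdsWithin_le_nhds) hbound

end IsCutoff

end Supersolution

/-! ### Parabolic cut-off functions -/

section ParabolicCutoff

open Set
open scoped ContDiff

variable {n : ℕ} {a : Fin n → Fin n → Pt n → ℝ} {A : Pt n → ℝ} {p : Pt n} {α c C R s t : ℝ}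

/-- A smooth decreasing function equal to `1` on `(-∞, 1]` and to `0` on `[2, ∞)`. -/
def cutoffProfile (s : ℝ) : ℝ := smoothTransition (2 - s)

lemma contDiff_cutoffProfile : ContDiff ℝ ∞ cutoffProfile :=
  smoothTransition.contDiff.comp (contDiff_const.sub contDiff_id)

lemma hasDerivAt_cutoffProfile (s : ℝ) :
    HasDerivAt cutoffProfile (deriv cutoffProfile s) s :=
  (contDiff_cutoffProfile.differentiable (by norm_num) s).hasDerivAt

lemma cutoffProfile_nonneg (s : ℝ) : 0 ≤ cutoffProfile s := smoothTransition.nonneg _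

lemma cutoffProfile_le_one (s : ℝ) : cutoffProfile s ≤ 1 := smoothTransition.le_one _

lemma cutoffProfile_of_le_one (hs : s ≤ 1) : cutoffProfile s = 1 :=
  smoothTransition.one_of_one_le (by linarith)

lemma cutoffProfile_of_two_le (hs : 2 ≤ s) : cutoffProfile s = 0 :=
  smoothTransition.zero_of_nonpos (by linarith)

lemma deriv_cutoffProfile_nonpos (s : ℝ) : deriv cutoffProfile s ≤ 0 :=
  Antitone.deriv_nonpos fun _ _ hxy => smoothTransition.monotone (by linarith)

lemma deriv_cutoffProfile_of_le_one (hs : s ≤ 1) : deriv cutoffProfile s = 0 :=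
  IsLocalMax.deriv_eq_zero <| .of_forall fun x =>
    (cutoffProfile_le_one x).trans_eq (cutoffProfile_of_le_one hs).symm

lemma deriv_cutoffProfile_of_two_le (hs : 2 ≤ s) : deriv cutoffProfile s = 0 :=
  IsLocalMin.deriv_eq_zero <| .of_forall fun x =>
    (cutoffProfile_of_two_le hs).trans_le (cutoffProfile_nonneg x)

lemma exists_abs_deriv_cutoffProfile_le : ∃ C, ∀ s, |deriv cutoffProfile s| ≤ C :=
  (contDiff_cutoffProfile.continuous_deriv (by norm_num)).bounded_above_of_compact_support <|
    .intro (isCompact_Icc (a := 1) (b := 2)) fun s hs => by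
      rcases lt_or_ge s 1 with h | h
      · exact deriv_cutoffProfile_of_le_one h.le
      · exact deriv_cutoffProfile_of_two_le (not_le.1 fun h' => hs ⟨h, h'⟩).le

/-- The time factor of `parabolicCutoff`, equal to `1` for `2 / R ≤ t ≤ R ^ α` and vanishing for
`t ≤ 1 / R` and for `t ≥ 2 * R ^ α`. -/
def timeCutoff (α R t : ℝ) : ℝ := (1 - cutoffProfile (R * t)) * cutoffProfile (t / R ^ α)

/-- A cut-off adapted to the parabolic scaling `t ∼ |x| ^ α` of condition (8). -/
def parabolicCutoff (α R : ℝ) (p : Pt n) : ℝ :=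
  timeCutoff α R p.1 * cutoffProfile (‖p.2‖ ^ 2 / R ^ 2)

/-- The part of the half-space where `parabolicCutoff α R` decreases in time or depends on the
space variable. -/
def outerRegion (n : ℕ) (α R : ℝ) : Set (Pt n) :=
  {p ∈ halfSpace n | R ^ α < p.1 ∨ R < ‖p.2‖}

lemma outerRegion_subset_halfSpace (n : ℕ) (α R : ℝ) : outerRegion n α R ⊆ halfSpace n :=
  sep_subset _ _

lemma timeCutoff_mem_Icc (α R t : ℝ) : timeCutoff α R t ∈ Icc 0 1 := by
  have h0 := cutoffProfile_nonneg (R * t)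
  have h1 := cutoffProfile_le_one (R * t)
  exact unitInterval.mul_mem ⟨by linarith, by linarith⟩
    ⟨cutoffProfile_nonneg _, cutoffProfile_le_one _⟩

lemma hasDerivAt_timeCutoff (α R t : ℝ) :
    HasDerivAt (timeCutoff α R)
      (-(deriv cutoffProfile (R * t) * R) * cutoffProfile (t / R ^ α)
        + (1 - cutoffProfile (R * t)) * (deriv cutoffProfile (t / R ^ α) * (1 / R ^ α))) t := by
  have hmul : HasDerivAt (fun t => R * t) R t := by
    simpa using (hasDerivAt_id t).const_mul R
  have hdiv : HasDerivAt (fun t => t / R ^ α) (1 / R ^ α) t := (hasDerivAt_id t).div_const _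
  have hearly : HasDerivAt (fun t => 1 - cutoffProfile (R * t)) _ t :=
    ((hasDerivAt_cutoffProfile (R * t)).comp t hmul).const_sub 1
  have hlate : HasDerivAt (fun t => cutoffProfile (t / R ^ α)) _ t :=
    HasDerivAt.comp (h₂ := cutoffProfile) t (hasDerivAt_cutoffProfile (t / R ^ α)) hdiv
  exact hearly.mul hlate

lemma neg_deriv_timeCutoff_le (hR : 0 ≤ R) :
    -deriv (timeCutoff α R) t ≤ |deriv cutoffProfile (t / R ^ α)| * R ^ (-α) := by
  have hinc : 0 ≤ -(deriv cutoffProfile (R * t) * R) * cutoffProfile (t / R ^ α) :=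
    mul_nonneg (neg_nonneg.2 (mul_nonpos_of_nonpos_of_nonneg (deriv_cutoffProfile_nonpos _) hR))
      (cutoffProfile_nonneg _)
  rw [(hasDerivAt_timeCutoff α R t).deriv, rpow_neg hR, ← one_div]
  have hdec : (1 - cutoffProfile (R * t)) * (|deriv cutoffProfile (t / R ^ α)| * (1 / R ^ α)) ≤
      |deriv cutoffProfile (t / R ^ α)| * (1 / R ^ α) :=
    mul_le_of_le_one_left (by positivity) (sub_le_self _ (cutoffProfile_nonneg _))
  rw [abs_of_nonpos (deriv_cutoffProfile_nonpos _)] at hdec ⊢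
  linarith

lemma hasFDerivAt_mul_comp_norm_sq {f g : ℝ → ℝ} {f' g' : ℝ} (hf : HasDerivAt f f' p.1)
    (hg : HasDerivAt g g' (‖p.2‖ ^ 2)) :
    HasFDerivAt (fun p : Pt n => f p.1 * g (‖p.2‖ ^ 2))
      ((f' * g (‖p.2‖ ^ 2)) • ContinuousLinearMap.fst ℝ ℝ (Xn n)
        + (2 * f p.1 * g') • (innerSL ℝ p.2).comp (ContinuousLinearMap.snd ℝ ℝ (Xn n))) p := by
  have hf' := hf.comp_hasFDerivAt p (hasFDerivAt_fst (𝕜 := ℝ) (E := ℝ) (F := Xn n))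
  have hg' := hg.comp_hasFDerivAt p (hasFDerivAt_snd (𝕜 := ℝ) (E := ℝ) (F := Xn n)).norm_sq
  refine (hf'.mul hg').congr_fderiv ?_
  ext <;> simp <;> ring

lemma pdT_mul_comp_norm_sq {f g : ℝ → ℝ} {f' g' : ℝ} (hf : HasDerivAt f f' p.1)
    (hg : HasDerivAt g g' (‖p.2‖ ^ 2)) :
    pdT (fun p : Pt n => f p.1 * g (‖p.2‖ ^ 2)) p = f' * g (‖p.2‖ ^ 2) := by
  simp [pdT, (hasFDerivAt_mul_comp_norm_sq hf hg).fderiv]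

lemma spaceGrad_mul_comp_norm_sq {f g : ℝ → ℝ} {f' g' : ℝ} (hf : HasDerivAt f f' p.1)
    (hg : HasDerivAt g g' (‖p.2‖ ^ 2)) :
    spaceGrad (fun p : Pt n => f p.1 * g (‖p.2‖ ^ 2)) p = (2 * f p.1 * g') • p.2 := by
  ext j
  simp [spaceGrad, pdX, (hasFDerivAt_mul_comp_norm_sq hf hg).fderiv,
    EuclideanSpace.inner_single_right]

lemma pdT_parabolicCutoff (α R : ℝ) (p : Pt n) :
    pdT (parabolicCutoff α R) p =
      deriv (timeCutoff α R) p.1 * cutoffProfile (‖p.2‖ ^ 2 / R ^ 2) :=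
  pdT_mul_comp_norm_sq (g := fun r => cutoffProfile (r / R ^ 2))
    (hasDerivAt_timeCutoff α R p.1).differentiableAt.hasDerivAt
    ((hasDerivAt_cutoffProfile _).comp _ ((hasDerivAt_id _).div_const _))

lemma spaceGrad_parabolicCutoff (α R : ℝ) (p : Pt n) :
    spaceGrad (parabolicCutoff α R) p =
      (2 * timeCutoff α R p.1 * (deriv cutoffProfile (‖p.2‖ ^ 2 / R ^ 2) * (1 / R ^ 2))) • p.2 :=
  spaceGrad_mul_comp_norm_sq (g := fun r => cutoffProfile (r / R ^ 2))
    (hasDerivAt_timeCutoff α R p.1).differentiableAt.hasDerivAt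
    ((hasDerivAt_cutoffProfile _).comp _ ((hasDerivAt_id _).div_const _))

lemma contDiff_parabolicCutoff (α R : ℝ) :
    ContDiff ℝ ∞ (parabolicCutoff α R : Pt n → ℝ) :=
  ((contDiff_const.sub (contDiff_cutoffProfile.comp (contDiff_const.mul contDiff_fst))).mul
    (contDiff_cutoffProfile.comp (contDiff_fst.div_const _))).mul
    (contDiff_cutoffProfile.comp ((contDiff_snd.norm_sq ℝ).div_const _))

lemma parabolicCutoff_mem_Icc (α R : ℝ) (p : Pt n) : parabolicCutoff α R p ∈ Icc 0 1 :=
  unitInterval.mul_mem (timeCutoff_mem_Icc α R p.1)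
    ⟨cutoffProfile_nonneg _, cutoffProfile_le_one _⟩

lemma parabolicCutoff_eq_one (hR : 0 < R) (ht : 2 / R ≤ p.1) (hp : p ∈ (outerRegion n α R)ᶜ) :
    parabolicCutoff α R p = 1 := by
  have hp0 : p ∈ halfSpace n := (div_pos two_pos hR).trans_le ht
  have hp' : p.1 ≤ R ^ α ∧ ‖p.2‖ ≤ R := by
    simpa only [outerRegion, mem_compl_iff, mem_sep_iff, hp0, true_and, not_or, not_lt] using hp
  rw [parabolicCutoff, timeCutoff, cutoffProfile_of_two_le (by rwa [← div_le_iff₀' hR]),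
    cutoffProfile_of_le_one ((div_le_one (by positivity)).2 hp'.1),
    cutoffProfile_of_le_one ((div_le_one (by positivity)).2 (by gcongr; exact hp'.2))]
  norm_num

lemma support_parabolicCutoff_subset (hR : 0 < R) :
    Function.support (parabolicCutoff α R : Pt n → ℝ) ⊆
      Icc (1 / R) (2 * R ^ α) ×ˢ Metric.closedBall 0 (2 * R) := by
  intro p hp
  have hRα : 0 < R ^ α := rpow_pos_of_pos hR α
  rw [Function.mem_support, parabolicCutoff, timeCutoff, mul_ne_zero_iff, mul_ne_zero_iff] at hp
  obtain ⟨⟨hearly, hlate⟩, hspace⟩ := hp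
  refine ⟨⟨?_, ?_⟩, mem_closedBall_zero_iff.2 ?_⟩ <;> by_contra! h
  · rw [lt_div_iff₀' hR] at h
    exact hearly (by rw [cutoffProfile_of_le_one h.le, sub_self])
  · exact hlate (cutoffProfile_of_two_le (by rw [le_div_iff₀ hRα]; exact h.le))
  · exact hspace (cutoffProfile_of_two_le (by rw [le_div_iff₀ (by positivity)]; nlinarith))

lemma tsupport_parabolicCutoff_subset (hR : 0 < R) :
    tsupport (parabolicCutoff α R : Pt n → ℝ) ⊆
      Icc (1 / R) (2 * R ^ α) ×ˢ Metric.closedBall 0 (2 * R) :=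
  closure_minimal (support_parabolicCutoff_subset hR) (isClosed_Icc.prod Metric.isClosed_closedBall)

lemma isTestFunction_parabolicCutoff (hR : 0 < R) :
    IsTestFunction 1 (halfSpace n) (parabolicCutoff α R) where
  contDiff := (contDiff_parabolicCutoff α R).of_le (by norm_num)
  hasCompactSupport := (isCompact_Icc.prod (isCompact_closedBall _ _)).of_isClosed_subset
    (isClosed_tsupport _) (tsupport_parabolicCutoff_subset hR)
  tsupport_subset := fun _ hp =>
    (one_div_pos.2 hR).trans_le (tsupport_parabolicCutoff_subset hR hp).1.1
  nonneg := fun p => (parabolicCutoff_mem_Icc α R p).1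

lemma volume_support_parabolicCutoff_le (hR : 0 < R) :
    volume (Function.support (parabolicCutoff α R : Pt n → ℝ)) ≤
      ENNReal.ofReal (2 ^ (n + 1) * volume.real (Metric.ball (0 : Xn n) 1) * R ^ (n + α)) :=
  calc volume (Function.support (parabolicCutoff α R : Pt n → ℝ))
      ≤ volume (Icc (1 / R) (2 * R ^ α) ×ˢ Metric.closedBall (0 : Xn n) (2 * R)) :=
        measure_mono (support_parabolicCutoff_subset hR)
    _ = ENNReal.ofReal (2 * R ^ α - 1 / R) * (ENNReal.ofReal ((2 * R) ^ n)
          * ENNReal.ofReal (volume.real (Metric.ball (0 : Xn n) 1))) := by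
        rw [Measure.volume_eq_prod, Measure.prod_prod, Real.volume_Icc,
          Measure.addHaar_closedBall _ _ (by positivity), finrank_euclideanSpace_fin,
          ofReal_measureReal measure_ball_lt_top.ne]
    _ ≤ ENNReal.ofReal (2 * R ^ α) * (ENNReal.ofReal ((2 * R) ^ n)
          * ENNReal.ofReal (volume.real (Metric.ball (0 : Xn n) 1))) := by
        gcongr
        exact sub_le_self _ (by positivity)
    _ = _ := by
        rw [← ENNReal.ofReal_mul (by positivity), ← ENNReal.ofReal_mul (by positivity),
          rpow_add hR, rpow_natCast]
        congr 1
        ring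

lemma measurableSet_outerRegion (n : ℕ) (α R : ℝ) : MeasurableSet (outerRegion n α R) :=
  ((isOpen_halfSpace n).inter ((isOpen_lt continuous_const continuous_fst).union
    (isOpen_lt continuous_const continuous_snd.norm))).measurableSet

lemma neg_pdT_parabolicCutoff_le (hC : ∀ s, |deriv cutoffProfile s| ≤ C) (hR : 0 < R) (p : Pt n) :
    -pdT (parabolicCutoff α R) p ≤ (outerRegion n α R).indicator (fun _ => C * R ^ (-α)) p := by
  have hprod : -pdT (parabolicCutoff α R) p ≤
      |deriv cutoffProfile (p.1 / R ^ α)| * R ^ (-α) := by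
    rw [pdT_parabolicCutoff, ← neg_mul]
    calc _ ≤ |deriv cutoffProfile (p.1 / R ^ α)| * R ^ (-α) * cutoffProfile (‖p.2‖ ^ 2 / R ^ 2) :=
          mul_le_mul_of_nonneg_right (neg_deriv_timeCutoff_le hR.le) (cutoffProfile_nonneg _)
      _ ≤ _ := mul_le_of_le_one_right (by positivity) (cutoffProfile_le_one _)
  refine hprod.trans ?_
  rcases le_or_gt p.1 (R ^ α) with ht | ht
  · rw [deriv_cutoffProfile_of_le_one ((div_le_one (by positivity)).2 ht), abs_zero, zero_mul]
    have hC0 := (abs_nonneg _).trans (hC 0)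
    exact indicator_nonneg (fun _ _ => by positivity) p
  · have hp : p ∈ outerRegion n α R := ⟨(rpow_pos_of_pos hR α).trans ht, .inl ht⟩
    rw [indicator_of_mem hp]
    gcongr
    exact hC _

lemma spaceGrad_parabolicCutoff_eq_zero (hR : 0 < R) (hp : ‖p.2‖ ≤ R ∨ 2 * R ≤ ‖p.2‖) :
    spaceGrad (parabolicCutoff α R) p = 0 := by
  have hderiv : deriv cutoffProfile (‖p.2‖ ^ 2 / R ^ 2) = 0 := by
    rcases hp with hp | hp
    · exact deriv_cutoffProfile_of_le_one ((div_le_one (by positivity)).2 (by gcongr))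
    · exact deriv_cutoffProfile_of_two_le ((le_div_iff₀ (by positivity)).2 (by nlinarith))
  rw [spaceGrad_parabolicCutoff, hderiv, zero_mul, mul_zero, zero_smul]

lemma norm_spaceGrad_parabolicCutoff_le (hC : ∀ s, |deriv cutoffProfile s| ≤ C) (hR : 0 < R)
    (hp : ‖p.2‖ ≤ 2 * R) : ‖spaceGrad (parabolicCutoff α R) p‖ ≤ 4 * C / R := by
  have hτ := timeCutoff_mem_Icc α R p.1
  have hC0 := (abs_nonneg _).trans (hC 0)
  rw [spaceGrad_parabolicCutoff, norm_smul, norm_eq_abs, abs_mul, abs_mul, abs_mul,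
    abs_of_nonneg hτ.1, abs_two, abs_of_pos (by positivity : 0 < 1 / R ^ 2)]
  calc _ ≤ 2 * 1 * (C * (1 / R ^ 2)) * (2 * R) := by
        gcongr
        · exact hτ.2
        · exact hC _
    _ = 4 * C / R := by
        field_simp
        ring

lemma coeffForm_spaceGrad_parabolicCutoff_le (hc : 0 ≤ c) (hR : 1 < R)
    (hC : ∀ s, |deriv cutoffProfile s| ≤ C)
    (hform : ∀ᵐ p ∂(volume.restrict (halfSpace n)), ∀ ξ : Xn n, coeffForm a p ξ ξ ≤ A p * ‖ξ‖ ^ 2)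
    (hA : Cond8 A α c) :
    ∀ᵐ p ∂(volume.restrict (halfSpace n)), coeffForm a p (spaceGrad (parabolicCutoff α R) p)
        (spaceGrad (parabolicCutoff α R) p) ≤
      (outerRegion n α R).indicator (fun _ => 16 * C ^ 2 * c * 2 ^ (2 - α) * R ^ (-α)) p := by
  have hR0 : 0 < R := by linarith
  have hannulus : MeasurableSet {p : Pt n | 0 < p.1 ∧ 2 * R / 2 < ‖p.2‖ ∧ ‖p.2‖ < 2 * R} :=
    ((isOpen_lt continuous_const continuous_fst).inter
      ((isOpen_lt continuous_const continuous_snd.norm).inter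
        (isOpen_lt continuous_snd.norm continuous_const))).measurableSet
  filter_upwards [hform,
    ae_restrict_of_ae ((ae_restrict_iff' hannulus).1 (hA (2 * R) (by linarith))),
    ae_restrict_mem (isOpen_halfSpace n).measurableSet] with p hfp hAp hp
  by_cases hx : ‖p.2‖ ≤ R ∨ 2 * R ≤ ‖p.2‖
  · rw [spaceGrad_parabolicCutoff_eq_zero hR0 hx, map_zero]
    exact indicator_nonneg (fun _ _ => by positivity) p
  · push Not at hx
    have hpE : p ∈ outerRegion n α R := ⟨hp, .inr hx.1⟩
    rw [indicator_of_mem hpE]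
    calc coeffForm a p (spaceGrad (parabolicCutoff α R) p) (spaceGrad (parabolicCutoff α R) p)
        ≤ A p * ‖spaceGrad (parabolicCutoff α R) p‖ ^ 2 := hfp _
      _ ≤ c * (2 * R) ^ (2 - α) * (4 * C / R) ^ 2 := by
          gcongr
          · exact hAp ⟨hp, by linarith, hx.2⟩
          · exact norm_spaceGrad_parabolicCutoff_le hC hR0 hx.2.le
      _ = 16 * C ^ 2 * c * 2 ^ (2 - α) * R ^ (-α) := by
          rw [mul_rpow two_pos.le hR0.le, sub_eq_add_neg 2 α, rpow_add hR0, rpow_two]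
          field_simp
          ring

lemma exists_isCutoff_parabolicCutoff (hc : 0 ≤ c)
    (hform : ∀ᵐ p ∂(volume.restrict (halfSpace n)), ∀ ξ : Xn n, coeffForm a p ξ ξ ≤ A p * ‖ξ‖ ^ 2)
    (hA : Cond8 A α c) :
    ∃ C₁ C₂, 0 ≤ C₁ ∧ 0 ≤ C₂ ∧ ∀ R, 1 < R →
      IsCutoff a (C₁ * R ^ (-α)) (C₂ * R ^ (n + α)) (outerRegion n α R) (parabolicCutoff α R) := by
  obtain ⟨C, hC⟩ := exists_abs_deriv_cutoffProfile_le
  have hC0 : 0 ≤ C := (abs_nonneg _).trans (hC 0)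
  have hK0 : 0 ≤ 16 * C ^ 2 * c * 2 ^ (2 - α) := by positivity
  refine ⟨C + 16 * C ^ 2 * c * 2 ^ (2 - α), 2 ^ (n + 1) * volume.real (Metric.ball (0 : Xn n) 1),
    by positivity, by positivity, fun R hR => ?_⟩
  have hR0 : 0 < R := by linarith
  exact {
    toIsTestFunction := isTestFunction_parabolicCutoff hR0
    le_one := fun p => (parabolicCutoff_mem_Icc α R p).2
    volume_support_le := volume_support_parabolicCutoff_le hR0
    measurableSet := measurableSet_outerRegion n α R
    subset_halfSpace := outerRegion_subset_halfSpace n α R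
    neg_pdT_le := fun p => (neg_pdT_parabolicCutoff_le hC hR0 p).trans
      (indicator_le_indicator (by gcongr; linarith))
    form_le := (coeffForm_spaceGrad_parabolicCutoff_le hc hR hC hform hA).mono fun p hp =>
      hp.trans (indicator_le_indicator (by gcongr; linarith)) }

end ParabolicCutoff

/-! ### The Liouville theorem for nonnegative supersolutions -/

section Liouville

open Filter Set Topology

variable {n : ℕ} {a : Fin n → Fin n → Pt n → ℝ} {A f w : Pt n → ℝ} {p : Pt n}
  {C α c q κ θ₁ θ₂ : ℝ} {k : ℕ}

lemma eventually_notMem_outerRegion (hα : 0 < α) (p : Pt n) :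
    ∀ᶠ R in atTop, p ∈ (outerRegion n α R)ᶜ := by
  filter_upwards [(tendsto_rpow_atTop hα).eventually_ge_atTop p.1, eventually_ge_atTop ‖p.2‖]
    with R ht hx hp
  exact hp.2.elim ht.not_gt hx.not_gt

lemma eventually_parabolicCutoff_eq_one (hα : 0 < α) (hp : p ∈ halfSpace n) :
    ∀ᶠ R in atTop, parabolicCutoff α R p = 1 := by
  filter_upwards [eventually_notMem_outerRegion hα p, eventually_gt_atTop 0,
    eventually_ge_atTop (2 / p.1)] with R hpR hR ht
  exact parabolicCutoff_eq_one hR ((div_le_comm₀ hp hR).1 ht) hpR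

lemma measurableSet_parabolicCutoff_eq_one (n : ℕ) (α R : ℝ) :
    MeasurableSet {p : Pt n | parabolicCutoff α R p = 1} :=
  (isClosed_eq (contDiff_parabolicCutoff α R).continuous continuous_const).measurableSet

section Exhaustion

variable {ι : Type*} {l : Filter ι} {R : ι → ℝ}

lemma aecover_compl_outerRegion (hα : 0 < α) (hR : Tendsto R l atTop) :
    AECover (volume.restrict (halfSpace n)) l fun i => (outerRegion n α (R i))ᶜ where
  ae_eventually_mem := .of_forall fun p => hR.eventually (eventually_notMem_outerRegion hα p)
  measurableSet i := (measurableSet_outerRegion n α (R i)).compl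

lemma aecover_parabolicCutoff_eq_one (hα : 0 < α) (hR : Tendsto R l atTop) :
    AECover (volume.restrict (halfSpace n)) l fun i => {p | parabolicCutoff α (R i) p = 1} :=
  aecover_restrict_of_ae_imp (isOpen_halfSpace n).measurableSet
    (.of_forall fun _ hp => hR.eventually (eventually_parabolicCutoff_eq_one hα hp)) fun i =>
    measurableSet_parabolicCutoff_eq_one n α (R i)

lemma tendsto_setIntegral_outerRegion [l.IsCountablyGenerated] (hα : 0 < α)
    (hR : Tendsto R l atTop) (hf : IntegrableOn f (halfSpace n)) :
    Tendsto (fun i => ∫ p in outerRegion n α (R i), f p) l (𝓝 0) := by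
  have hcompl := (aecover_compl_outerRegion hα hR).integral_tendsto_of_countably_generated hf
  have hdiff := hcompl.const_sub (∫ p in halfSpace n, f p)
  rw [sub_self] at hdiff
  refine hdiff.congr fun i => ?_
  have hE := measurableSet_outerRegion n α (R i)
  rw [← integral_add_compl hE hf, add_sub_cancel_right, Measure.restrict_restrict hE,
    inter_eq_self_of_subset_left (outerRegion_subset_halfSpace n α (R i))]

end Exhaustion

lemma integrableOn_mul_parabolicCutoff_pow (hf : ContinuousOn f (halfSpace n)) {R : ℝ}
    (hR : 0 < R) (hk : k ≠ 0) :
    IntegrableOn (fun p => f p * parabolicCutoff α R p ^ k) (halfSpace n) :=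
  (integrable_mul_isTestFunction (hf.locallyIntegrableOn (isOpen_halfSpace n).measurableSet)
    ((isTestFunction_parabolicCutoff hR).pow hk)).integrableOn

lemma eqOn_mul_parabolicCutoff_pow (f : Pt n → ℝ) (α R : ℝ) (k : ℕ) :
    EqOn (fun p => f p * parabolicCutoff α R p ^ k) f {p | parabolicCutoff α R p = 1} :=
  fun p hp => by simp only [show parabolicCutoff α R p = 1 from hp, one_pow, mul_one]

lemma integrableOn_parabolicCutoff_eq_one (hf : ContinuousOn f (halfSpace n)) {R : ℝ}
    (hR : 0 < R) :
    IntegrableOn f {p | parabolicCutoff α R p = 1} (volume.restrict (halfSpace n)) :=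
  (integrableOn_mul_parabolicCutoff_pow hf hR one_ne_zero).integrable.integrableOn.congr_fun
    (eqOn_mul_parabolicCutoff_pow f α R 1) (measurableSet_parabolicCutoff_eq_one n α R)

lemma setIntegral_parabolicCutoff_eq_one_le (hf : ContinuousOn f (halfSpace n))
    (hf0 : ∀ p ∈ halfSpace n, 0 ≤ f p) {R : ℝ} (hR : 0 < R) (hk : k ≠ 0) :
    ∫ p in {p | parabolicCutoff α R p = 1}, f p ∂(volume.restrict (halfSpace n)) ≤
      ∫ p in halfSpace n, f p * parabolicCutoff α R p ^ k := by
  rw [← setIntegral_congr_fun (measurableSet_parabolicCutoff_eq_one n α R)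
    (eqOn_mul_parabolicCutoff_pow f α R k)]
  exact setIntegral_le_integral (integrableOn_mul_parabolicCutoff_pow hf hR hk) <|
    (ae_restrict_mem (isOpen_halfSpace n).measurableSet).mono fun p hp =>
      mul_nonneg (hf0 p hp) (pow_nonneg (parabolicCutoff_mem_Icc α R p).1 k)

lemma tendsto_natCast_add_two : Tendsto (fun i : ℕ => (i : ℝ) + 2) atTop atTop :=
  tendsto_atTop_add_const_right _ _ tendsto_natCast_atTop_atTop

lemma integrableOn_of_setIntegral_mul_parabolicCutoff_pow_le (hα : 0 < α)
    (hf : ContinuousOn f (halfSpace n)) (hf0 : ∀ p ∈ halfSpace n, 0 ≤ f p) (hk : k ≠ 0) (B : ℝ)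
    (hB : ∀ R, 1 < R → ∫ p in halfSpace n, f p * parabolicCutoff α R p ^ k ≤ B) :
    IntegrableOn f (halfSpace n) := by
  refine (aecover_parabolicCutoff_eq_one hα
    tendsto_natCast_add_two).integrable_of_integral_bounded_of_nonneg_ae B
    (fun i => integrableOn_parabolicCutoff_eq_one hf (by positivity))
    ((ae_restrict_mem (isOpen_halfSpace n).measurableSet).mono hf0)
    (.of_forall fun i =>
      (setIntegral_parabolicCutoff_eq_one_le hf hf0 (by positivity) hk).trans (hB _ ?_))
  linarith [i.cast_nonneg (α := ℝ)]

lemma integrableOn_of_setIntegral_le_outerRegion (hα : 0 < α) (hf : ContinuousOn f (halfSpace n))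
    (hf0 : ∀ p ∈ halfSpace n, 0 ≤ f p) (hk : k ≠ 0) (hC : 0 ≤ C) (hκ : 0 < κ) (hθ₁ : θ₁ ∈ Ioo 0 1)
    (hθ₂ : θ₂ ∈ Ioo 0 1)
    (hbound : ∀ R, 1 < R → ∫ p in halfSpace n, f p * parabolicCutoff α R p ^ k ≤
      C * (1 + (κ * ∫ p in outerRegion n α R, f p * parabolicCutoff α R p ^ k) ^ θ₁
        + (κ * ∫ p in outerRegion n α R, f p * parabolicCutoff α R p ^ k) ^ θ₂)) :
    IntegrableOn f (halfSpace n) := by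
  obtain ⟨B, hB⟩ := exists_forall_le_of_le_add_rpow hθ₁.1.le hθ₁.2 hθ₂.1.le hθ₂.2 hκ hC
  refine integrableOn_of_setIntegral_mul_parabolicCutoff_pow_le hα hf hf0 hk B fun R hR => ?_
  have hS := (isOpen_halfSpace n).measurableSet
  have hfψ (p : Pt n) (hp : p ∈ halfSpace n) : 0 ≤ f p * parabolicCutoff α R p ^ k :=
    mul_nonneg (hf0 p hp) (pow_nonneg (parabolicCutoff_mem_Icc α R p).1 k)
  have houter : 0 ≤ ∫ p in outerRegion n α R, f p * parabolicCutoff α R p ^ k :=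
    setIntegral_nonneg (measurableSet_outerRegion n α R) fun p hp => hfψ p hp.1
  have houter_le : ∫ p in outerRegion n α R, f p * parabolicCutoff α R p ^ k ≤
      ∫ p in halfSpace n, f p * parabolicCutoff α R p ^ k :=
    setIntegral_mono_set (integrableOn_mul_parabolicCutoff_pow hf (zero_lt_one.trans hR) hk)
      ((ae_restrict_mem hS).mono hfψ) (outerRegion_subset_halfSpace n α R).eventuallyLE
  refine hB _ (setIntegral_nonneg hS hfψ) ((hbound R hR).trans ?_)
  have := hθ₁.1
  have := hθ₂.1
  gcongr

lemma setIntegral_nonpos_of_le_outerRegion (hα : 0 < α) (hf : ContinuousOn f (halfSpace n))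
    (hf0 : ∀ p ∈ halfSpace n, 0 ≤ f p) (hk : k ≠ 0) (hC : 0 ≤ C) (hκ : 0 ≤ κ) (hθ₁ : 0 < θ₁)
    (hθ₂ : 0 < θ₂) (hfi : IntegrableOn f (halfSpace n))
    (hbound : ∀ R σ, 1 < R → 0 < σ → ∫ p in halfSpace n, f p * parabolicCutoff α R p ^ k ≤
      C * (σ + (κ * ∫ p in outerRegion n α R, f p * parabolicCutoff α R p ^ k) ^ θ₁
        + (κ * ∫ p in outerRegion n α R, f p * parabolicCutoff α R p ^ k) ^ θ₂ / σ)) :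
    ∫ p in halfSpace n, f p ≤ 0 := by
  have hle (σ : ℝ) (hσ : 0 < σ) : ∫ p in halfSpace n, f p ≤ C * σ := by
    have htail : Tendsto (fun i : ℕ => κ * ∫ p in outerRegion n α (i + 2), f p) atTop (𝓝 0) := by
      simpa only [mul_zero] using
        (tendsto_setIntegral_outerRegion hα tendsto_natCast_add_two hfi).const_mul κ
    have hpow {θ : ℝ} (hθ : 0 < θ) :
        Tendsto (fun i : ℕ => (κ * ∫ p in outerRegion n α (i + 2), f p) ^ θ) atTop (𝓝 0) := by
      simpa only [zero_rpow hθ.ne'] using htail.rpow_const (.inr hθ.le)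
    have hright := (((hpow hθ₁).const_add σ).add ((hpow hθ₂).div_const σ)).const_mul C
    rw [add_zero, zero_div, add_zero] at hright
    refine le_of_tendsto_of_tendsto' ((aecover_parabolicCutoff_eq_one hα
      tendsto_natCast_add_two).integral_tendsto_of_countably_generated hfi) hright fun i => ?_
    have hR : (1 : ℝ) < i + 2 := by linarith [i.cast_nonneg (α := ℝ)]
    refine (setIntegral_parabolicCutoff_eq_one_le hf hf0 (by positivity) hk).trans
      ((hbound _ σ hR hσ).trans ?_)
    have houter := measurableSet_outerRegion n α (i + 2)
    have hsub := outerRegion_subset_halfSpace n α (i + 2)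
    have houter0 : 0 ≤ ∫ p in outerRegion n α (i + 2), f p * parabolicCutoff α (i + 2) p ^ k :=
      setIntegral_nonneg houter fun p hp =>
        mul_nonneg (hf0 p hp.1) (pow_nonneg (parabolicCutoff_mem_Icc _ _ p).1 k)
    have houter_le : ∫ p in outerRegion n α (i + 2), f p * parabolicCutoff α (i + 2) p ^ k ≤
        ∫ p in outerRegion n α (i + 2), f p :=
      setIntegral_mono_on
        ((integrableOn_mul_parabolicCutoff_pow hf (by positivity) hk).mono_set hsub)
        (hfi.mono_set hsub) houter fun p hp =>
        mul_le_of_le_one_right (hf0 p hp.1)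
          (pow_le_one₀ (parabolicCutoff_mem_Icc _ _ p).1 (parabolicCutoff_mem_Icc _ _ p).2)
    gcongr
  have hlim : Tendsto (fun σ => C * σ) (𝓝[>] 0) (𝓝 0) := by
    have := ((continuous_const_mul C).tendsto 0).mono_left (nhdsWithin_le_nhds (s := Ioi 0))
    rwa [mul_zero] at this
  exact ge_of_tendsto hlim (eventually_mem_nhdsWithin.mono hle)

lemma exists_add_two_mul_one_add_le_mul (hq : 1 < q) :
    ∃ (ν : ℝ) (m : ℕ), 0 < ν ∧ ν < 1 ∧ 1 + ν < q ∧ m ≠ 0 ∧ (m + 2) * (1 + ν) ≤ m * q := by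
  obtain ⟨ν, hν0, hν⟩ := exists_between (lt_min one_pos (sub_pos.2 hq))
  obtain ⟨hν1, hνq⟩ := lt_min_iff.1 hν
  have hgap : 0 < q - (1 + ν) := by linarith
  obtain ⟨m, hm⟩ := exists_nat_gt (2 * (1 + ν) / (q - (1 + ν)))
  have hm0 : (0 : ℝ) < m := lt_trans (by positivity) hm
  rw [div_lt_iff₀ hgap] at hm
  exact ⟨ν, m, hν0, hν1, by linarith, (Nat.cast_pos.1 hm0).ne', by linarith⟩

lemma IsNonnegSupersol.exists_source_le_outerRegion (hq : 1 < q)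
    (ha : ∀ i j, LocallyIntegrableOn (a i j) (halfSpace n))
    (hB : ∀ᵐ p ∂(volume.restrict (halfSpace n)), (coeffForm a p).IsPosSemidef)
    (hc : 0 ≤ c)
    (hform : ∀ᵐ p ∂(volume.restrict (halfSpace n)), ∀ ξ : Xn n, coeffForm a p ξ ξ ≤ A p * ‖ξ‖ ^ 2)
    (hA : Cond8 A (n * (q - 1)) c) (hw : IsNonnegSupersol a q w) :
    ∃ (C θ₁ θ₂ : ℝ) (k : ℕ), 0 ≤ C ∧ θ₁ ∈ Ioo 0 1 ∧ θ₂ ∈ Ioo 0 1 ∧ k ≠ 0 ∧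
      ∀ R σ, 1 < R → 0 < σ →
        ∫ p in halfSpace n, w p ^ q * parabolicCutoff (n * (q - 1)) R p ^ k ≤
          C * (σ + (2 ^ (q - 1) * ∫ p in outerRegion n (n * (q - 1)) R,
              w p ^ q * parabolicCutoff (n * (q - 1)) R p ^ k) ^ θ₁
            + (2 ^ (q - 1) * ∫ p in outerRegion n (n * (q - 1)) R,
              w p ^ q * parabolicCutoff (n * (q - 1)) R p ^ k) ^ θ₂ / σ) := by
  have hq0 : 0 < q := zero_lt_one.trans hq
  obtain ⟨ν, m, hν0, hν1, hνq, hm, hmq⟩ := exists_add_two_mul_one_add_le_mul hq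
  obtain ⟨C₁, C₂, hC₁, hC₂, hcut⟩ := exists_isCutoff_parabolicCutoff hc hform hA
  obtain ⟨C, hC, hle⟩ := IsCutoff.exists_source_le hq hν0 hν1 hm hmq ha hB hw hC₁ hC₂
  refine ⟨C, 1 / q, (1 + ν) / q, m + 2, hC, ⟨by positivity, (div_lt_one hq0).2 hq⟩,
    ⟨by positivity, (div_lt_one hq0).2 hνq⟩, by lia, fun R σ hR hσ => ?_⟩
  have hR0 : 0 < R := zero_lt_one.trans hR
  have hspeed : R ^ (-(n * (q - 1))) = (R ^ n) ^ (1 - q) := by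
    rw [← rpow_natCast_mul hR0.le]
    ring_nf
  have hvolume : R ^ (n + n * (q - 1)) = (R ^ n) ^ q := by
    rw [← rpow_natCast_mul hR0.le]
    ring_nf
  have hψ := hcut R hR
  rw [hspeed, hvolume] at hψ
  exact hle (by positivity) hσ hψ

theorem IsNonnegSupersol.eq_zero (hn : 1 ≤ n) (hq : 1 < q)
    (ha : ∀ i j, LocallyIntegrableOn (a i j) (halfSpace n))
    (hB : ∀ᵐ p ∂(volume.restrict (halfSpace n)), (coeffForm a p).IsPosSemidef)
    (hc : 0 ≤ c)
    (hform : ∀ᵐ p ∂(volume.restrict (halfSpace n)), ∀ ξ : Xn n, coeffForm a p ξ ξ ≤ A p * ‖ξ‖ ^ 2)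
    (hA : Cond8 A (n * (q - 1)) c) (hw : IsNonnegSupersol a q w) :
    ∀ p ∈ halfSpace n, w p = 0 := by
  have hq0 : 0 < q := zero_lt_one.trans hq
  have hα : 0 < n * (q - 1) := mul_pos (Nat.cast_pos.2 hn) (sub_pos.2 hq)
  have hf := hw.continuousOn_rpow hq0.le
  have hf0 (p : Pt n) (hp : p ∈ halfSpace n) : 0 ≤ w p ^ q := rpow_nonneg (hw.nonneg p hp) q
  obtain ⟨C, θ₁, θ₂, k, hC, hθ₁, hθ₂, hk, hle⟩ :=
    hw.exists_source_le_outerRegion hq ha hB hc hform hA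
  have hfi : IntegrableOn (fun p => w p ^ q) (halfSpace n) :=
    integrableOn_of_setIntegral_le_outerRegion hα hf hf0 hk hC (κ := 2 ^ (q - 1)) (by positivity)
      hθ₁ hθ₂ fun R hR => by simpa only [div_one] using hle R 1 hR one_pos
  have hf0' : 0 ≤ᵐ[volume.restrict (halfSpace n)] fun p => w p ^ q :=
    (ae_restrict_mem (isOpen_halfSpace n).measurableSet).mono hf0
  have hzero : ∫ p in halfSpace n, w p ^ q = 0 :=
    (setIntegral_nonpos_of_le_outerRegion hα hf hf0 hk hC (by positivity) hθ₁.1 hθ₂.1 hfi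
      hle).antisymm (integral_nonneg_of_ae hf0')
  have hae := (integral_eq_zero_iff_of_nonneg_ae hf0' hfi).1 hzero
  have heq := Measure.eqOn_open_of_ae_eq hae (isOpen_halfSpace n) hf continuousOn_const
  exact fun p hp => (rpow_eq_zero (hw.nonneg p hp) hq0.ne').1 (heq hp)

end Liouville

lemma Cond8.mono {n : ℕ} {A : Pt n → ℝ} {α β c d : ℝ} (hA : Cond8 A α c) (hβ : β ≤ α)
    (hcd : c ≤ d) (hd : 0 ≤ d) : Cond8 A β d := fun R hR =>
  (hA R hR).mono fun _ hp => hp.trans (by gcongr; exact hR.le)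

lemma isNonnegSupersol_half_sub {n : ℕ} {q : ℝ} {a : Fin n → Fin n → Pt n → ℝ} {u v : Pt n → ℝ}
    (hq : 1 ≤ q) (ha : ∀ i j, LocallyIntegrableOn (a i j) (halfSpace n))
    (hu : ContDiffOn ℝ 1 u (halfSpace n)) (hv : ContDiffOn ℝ 1 v (halfSpace n))
    (hsup : WeakSuperSol a q u) (hsub : WeakSubSol a q v) (huv : ∀ p ∈ halfSpace n, v p ≤ u p) :
    IsNonnegSupersol a q fun p => (u p - v p) / 2 := by
  have hw : ContDiffOn ℝ 1 (fun p => (u p - v p) / 2) (halfSpace n) := (hu.sub hv).div_const 2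
  have hpow : ContinuousOn (fun p => ((u p - v p) / 2) ^ q) (halfSpace n) :=
    hw.continuousOn.rpow_const fun _ _ => .inr (by linarith)
  have hodd {f : Pt n → ℝ} (hf : ContDiffOn ℝ 1 f (halfSpace n)) :
      ContinuousOn (fun p => oddPow q (f p)) (halfSpace n) :=
    (continuous_oddPow hq).comp_continuousOn hf.continuousOn
  have hpow_le (p : Pt n) (hp : p ∈ halfSpace n) :
      ((u p - v p) / 2) ^ q ≤ (oddPow q (u p) - oddPow q (v p)) / 2 := by
    linarith [two_mul_half_sub_rpow_le_oddPow_sub hq (huv p hp)]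
  exact {
    contDiffOn := hw
    nonneg := fun p hp => div_nonneg (sub_nonneg.2 (huv p hp)) zero_le_two
    weakIneq := .of_smooth ha hw hpow <|
      .mono_right ha hw hpow (((hodd hu).sub (hodd hv)).div_const 2) hpow_le (by simp)
        (weakParabolicIneq_half_sub hq ha hu hv hsup hsub) }

theorem liouville_comparison_super_sub_general
    (n : ℕ) (hn : 1 ≤ n) (α c q : ℝ) (hq1 : 1 < q) (hq2 : q ≤ 1 + α / n)
    (a : Fin n → Fin n → Pt n → ℝ) (A : Pt n → ℝ)
    (ha : ∀ i j, LocallyIntegrableOn (a i j) (halfSpace n))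
    (ha_symm : ∀ i j, ∀ᵐ p ∂(volume.restrict (halfSpace n)), a i j p = a j i p)
    (hform : ∀ᵐ p ∂(volume.restrict (halfSpace n)), ∀ ξ : Xn n,
      0 ≤ ∑ i, ∑ j, a i j p * ξ i * ξ j ∧
      ∑ i, ∑ j, a i j p * ξ i * ξ j ≤ A p * ‖ξ‖ ^ 2)
    (hcond8 : Cond8 A α c)
    (u v : Pt n → ℝ)
    (hu : ContDiffOn ℝ 1 u (halfSpace n)) (hv : ContDiffOn ℝ 1 v (halfSpace n))
    (hsupersol : WeakSuperSol a q u)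
    (hsubsol : WeakSubSol a q v)
    (huv : ∀ p ∈ halfSpace n, v p ≤ u p) :
    ∀ p ∈ halfSpace n, u p = v p := by
  have hα : n * (q - 1) ≤ α := by
    rw [← le_div_iff₀' (Nat.cast_pos.2 hn)]
    linarith
  have hw := isNonnegSupersol_half_sub hq1.le ha hu hv hsupersol hsubsol huv
  have hB := ae_isPosSemidef_coeffForm ha_symm (hform.mono fun p hp ξ => (hp ξ).1)
  have hzero := hw.eq_zero hn hq1 ha hB (abs_nonneg c) (hform.mono fun p hp ξ => (hp ξ).2)
    (hcond8.mono hα (le_abs_self c) (abs_nonneg c))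
  intro p hp
  linarith [hzero p hp]

/-- the Liouville comparison principle for a super-solution and a
sub-solution (Theorem 2). -/
theorem liouville_comparison_super_sub
    (n : ℕ) (hn : 1 ≤ n) (α c q : ℝ) (hα : 0 < α) (hc : 0 < c)
    (hq1 : 1 < q) (hq2 : q ≤ 1 + α / n)
    (a : Fin n → Fin n → Pt n → ℝ) (A : Pt n → ℝ)
    (ha_meas : ∀ i j, Measurable (a i j))
    (ha_locbdd : ∀ i j, ∀ K : Set (Pt n), IsCompact K → K ⊆ halfSpace n →
      ∃ M, ∀ p ∈ K, |a i j p| ≤ M)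
    (ha_symm : ∀ i j, ∀ᵐ p ∂(volume.restrict (halfSpace n)), a i j p = a j i p)
    (hA_meas : Measurable A)
    (hA_nonneg : ∀ p, 0 ≤ A p)
    (hA_locbdd : ∀ K : Set (Pt n), IsCompact K → K ⊆ halfSpace n →
      ∃ M, ∀ p ∈ K, A p ≤ M)
    (hform : ∀ᵐ p ∂(volume.restrict (halfSpace n)), ∀ ξ : Xn n,
      0 ≤ ∑ i, ∑ j, a i j p * ξ i * ξ j ∧
      ∑ i, ∑ j, a i j p * ξ i * ξ j ≤ A p * ‖ξ‖ ^ 2)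
    (hcond8 : Cond8 A α c)
    (u v : Pt n → ℝ)
    (hu : ContDiffOn ℝ 1 u (halfSpace n)) (hv : ContDiffOn ℝ 1 v (halfSpace n))
    (hu_int : LocallyIntegrableOn (fun p => |u p| ^ q) (halfSpace n) volume)
    (hv_int : LocallyIntegrableOn (fun p => |v p| ^ q) (halfSpace n) volume)
    (hsupersol : WeakSuperSol a q u)
    (hsubsol : WeakSubSol a q v)
    (huv : ∀ p ∈ halfSpace n, v p ≤ u p) :
    ∀ p ∈ halfSpace n, u p = v p :=
  liouville_comparison_super_sub_general n hn α c q hq1 hq2 a A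
    (fun i j => locallyIntegrableOn_of_bounded_on_compacts (isOpen_halfSpace n) (ha_meas i j)
      (ha_locbdd i j)) ha_symm hform hcond8 u v hu hv hsupersol hsubsol huv
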